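/- Assume condition (C) and let q satisfy: q ∈ (u₁,u₀) if (K,c) ∈ D₁ with μ_b(K,c) ≥ μ_f(K,c) (i.e. (K,c) ∈ D_{1,1} ∪ D_{1,3}), or q ∈ (u₀,u₂) if either (K,c) ∈ D₁ with μ_b(K,c) < μ_f(K,c) (i.e. (K,c) ∈ D_{1,2}) or (K,c) ∈ D₂. Then there exists a value μ_per = μ_per(K,c,q) ∈ ℝ such that the system (TV) with parameter μ = μ_per has a nonconstant periodic solution (u,w) with u > 0 satisfying the initial condition (u(0),w(0)) = (q,0). -/

import Mathlib

open Set Filter MeasureTheory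

noncomputable section

namespace TrafficTW

/-- `f(u) = (K u - V(u) - c)/K`. -/
def fTV (V : ℝ → ℝ) (K c u : ℝ) : ℝ := (K * u - V u - c) / K

/-- `f'(u) = (K - V'(u))/K`. -/
def fdTV (V' : ℝ → ℝ) (K u : ℝ) : ℝ := (K - V' u) / K

/-- `h(u,μ) = f'(u) + μ`. -/
def hTV (V' : ℝ → ℝ) (K μ u : ℝ) : ℝ := fdTV V' K u + μ

/-- `g₁(u) = 1/(τ κ(1/u))`. -/
def g1TV (κ : ℝ → ℝ) (τ u : ℝ) : ℝ := 1 / (τ * κ (1 / u))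

/-- `g₂(u) = u/(2 τ κ(1/u))`. -/
def g2TV (κ : ℝ → ℝ) (τ u : ℝ) : ℝ := u / (2 * τ * κ (1 / u))

/-- The traveling-wave system (TV): `u' = w`, `w' = g₁ f + g₂ h w`. -/
def IsTVSol (V V' κ : ℝ → ℝ) (τ K c μ : ℝ) (u w : ℝ → ℝ) : Prop :=
  (∀ z, HasDerivAt u (w z) z) ∧
  (∀ z, HasDerivAt w
    (g1TV κ τ (u z) * fTV V K c (u z) + g2TV κ τ (u z) * hTV V' K μ (u z) * w z) z)

/-- Assumption (A1), where `V'` and `V''` are the first and second derivatives of `V`. -/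
def A1 (V V' V'' : ℝ → ℝ) (UM : ℝ) : Prop :=
  (∀ u ∈ Ici (0:ℝ), HasDerivWithinAt V (V' u) (Ici 0) u) ∧
  ContinuousOn V' (Ici 0) ∧
  (∀ u ∈ Ioi (0:ℝ), HasDerivAt V' (V'' u) u) ∧
  ContinuousOn V'' (Ioi 0) ∧
  (∀ u, 0 < u → 0 < V' u) ∧ (∃ M, ∀ u, 0 < u → V' u ≤ M) ∧
  Tendsto V' atTop (nhds 0) ∧
  0 < UM ∧ (∀ u, 0 < u → V' u ≤ V' UM) ∧
  (∀ u, 0 < u → (V'' u = 0 ↔ u = UM))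

/-- Assumption (A2). -/
def A2 (κ : ℝ → ℝ) : Prop :=
  ContDiffOn ℝ 1 κ (Ioi 0) ∧ ∀ ρ, 0 < ρ → 0 < κ ρ

/-- `c₀ = -V(0)`. -/
def c0v (V : ℝ → ℝ) : ℝ := - V 0

/-- `c_M(K) = K u_M(K) - V(u_M(K))`, where `uMx` is the function `K ↦ u_M(K)`. -/
def cMf (V : ℝ → ℝ) (uMx : ℝ → ℝ) (K : ℝ) : ℝ := K * uMx K - V (uMx K)

/-- `c_m(K) = K u_m(K) - V(u_m(K))`, where `umx` is the function `K ↦ u_m(K)`. -/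
def cmf (V : ℝ → ℝ) (umx : ℝ → ℝ) (K : ℝ) : ℝ := K * umx K - V (umx K)

/-- `c₁(K) = max (c₀, c_m(K))`. -/
def c1f (V : ℝ → ℝ) (umx : ℝ → ℝ) (K : ℝ) : ℝ := max (c0v V) (cmf V umx K)

/-- `uMx K = u_M(K)` is the unique local maximum point of `u ↦ K u - V(u)`, characterized
by `u_M(K) ∈ (0, U_M)` and `V'(u_M(K)) = K`, for `K ∈ (K₀, K_M)`. -/
def UMaxHyp (V' : ℝ → ℝ) (UM : ℝ) (uMx : ℝ → ℝ) : Prop :=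
  ∀ K, V' 0 < K → K < V' UM → uMx K ∈ Ioo 0 UM ∧ V' (uMx K) = K

/-- `umx K = u_m(K)` is the unique local minimum point of `u ↦ K u - V(u)`, characterized
by `u_m(K) ∈ (U_M, ∞)` and `V'(u_m(K)) = K`, for `K ∈ (0, K_M)`. -/
def UMinHyp (V' : ℝ → ℝ) (UM : ℝ) (umx : ℝ → ℝ) : Prop :=
  ∀ K, 0 < K → K < V' UM → UM < umx K ∧ V' (umx K) = K

/-- Characterization of `K₁ ∈ (K₀, K_M)`: `c_m(K) < c₀` for `K < K₁` and `c_m(K) > c₀`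
for `K > K₁`. -/
def K1Hyp (V V' : ℝ → ℝ) (UM : ℝ) (umx : ℝ → ℝ) (K₁ : ℝ) : Prop :=
  V' 0 < K₁ ∧ K₁ < V' UM ∧
  (∀ K, 0 < K → K < K₁ → cmf V umx K < c0v V) ∧
  cmf V umx K₁ = c0v V ∧
  (∀ K, K₁ < K → K < V' UM → c0v V < cmf V umx K)

/-- The parameter region `D₁`. -/
def D1 (V V' : ℝ → ℝ) (UM : ℝ) (uMx umx : ℝ → ℝ) : Set (ℝ × ℝ) :=
  {p | V' 0 < p.1 ∧ p.1 < V' UM ∧ c1f V umx p.1 < p.2 ∧ p.2 < cMf V uMx p.1}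

/-- The parameter region `D₂`. -/
def D2 (V V' : ℝ → ℝ) (umx : ℝ → ℝ) (K₁ : ℝ) : Set (ℝ × ℝ) :=
  {p | (V' 0 < p.1 ∧ p.1 < K₁ ∧ p.2 = c0v V) ∨
       (0 < p.1 ∧ p.1 < K₁ ∧ cmf V umx p.1 < p.2 ∧ p.2 < c0v V)}

/-- For `(K,c) ∈ D₁`: `u₁ < u₀ < u₂` are the exactly three positive zeros of `f`. -/
def ZerosD1 (V : ℝ → ℝ) (K c u1 u0 u2 : ℝ) : Prop :=
  0 < u1 ∧ u1 < u0 ∧ u0 < u2 ∧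
  fTV V K c u1 = 0 ∧ fTV V K c u0 = 0 ∧ fTV V K c u2 = 0 ∧
  ∀ u, 0 < u → fTV V K c u = 0 → u = u1 ∨ u = u0 ∨ u = u2

/-- For `(K,c) ∈ D₂`: `u₀ < u₂` are the exactly two positive zeros of `f`. -/
def ZerosD2 (V : ℝ → ℝ) (K c u0 u2 : ℝ) : Prop :=
  0 < u0 ∧ u0 < u2 ∧ fTV V K c u0 = 0 ∧ fTV V K c u2 = 0 ∧
  ∀ u, 0 < u → fTV V K c u = 0 → u = u0 ∨ u = u2

/-- Condition (HE1). -/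
def HE1 (u1 u2 : ℝ) (u w : ℝ → ℝ) : Prop :=
  Tendsto u atBot (nhds u1) ∧ Tendsto u atTop (nhds u2) ∧
  Tendsto w atBot (nhds 0) ∧ Tendsto w atTop (nhds 0) ∧ ∀ z, 0 < w z

/-- Condition (HE2). -/
def HE2 (u1 u2 : ℝ) (u w : ℝ → ℝ) : Prop :=
  Tendsto u atBot (nhds u2) ∧ Tendsto u atTop (nhds u1) ∧
  Tendsto w atBot (nhds 0) ∧ Tendsto w atTop (nhds 0) ∧ ∀ z, w z < 0

/-- Condition (HO) with level `ub`. -/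
def HO (ub : ℝ) (u w : ℝ → ℝ) : Prop :=
  Tendsto u atBot (nhds ub) ∧ Tendsto u atTop (nhds ub) ∧
  Tendsto w atBot (nhds 0) ∧ Tendsto w atTop (nhds 0) ∧
  ¬ (∀ z, u z = ub ∧ w z = 0)

/-- (TV) with parameter `μ` has a positive solution satisfying (HE1). -/
def HasHE1 (V V' κ : ℝ → ℝ) (τ K c μ u1 u2 : ℝ) : Prop :=
  ∃ u w : ℝ → ℝ, IsTVSol V V' κ τ K c μ u w ∧ (∀ z, 0 < u z) ∧ HE1 u1 u2 u w

/-- (TV) with parameter `μ` has a positive solution satisfying (HE2). -/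
def HasHE2 (V V' κ : ℝ → ℝ) (τ K c μ u1 u2 : ℝ) : Prop :=
  ∃ u w : ℝ → ℝ, IsTVSol V V' κ τ K c μ u w ∧ (∀ z, 0 < u z) ∧ HE2 u1 u2 u w

/-- (TV) with parameter `μ` has a positive solution satisfying (HO) with level `ub`. -/
def HasHO (V V' κ : ℝ → ℝ) (τ K c μ ub : ℝ) : Prop :=
  ∃ u w : ℝ → ℝ, IsTVSol V V' κ τ K c μ u w ∧ (∀ z, 0 < u z) ∧ HO ub u w

/-- Condition (H): `∫₁^∞ dρ/(ρ³ κ(ρ)) = ∞`. -/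
def CondH (κ : ℝ → ℝ) : Prop :=
  ¬ IntegrableOn (fun ρ => 1 / (ρ ^ 3 * κ ρ)) (Ioi 1)

/-- Condition (C). -/
def CondC (V' κ : ℝ → ℝ) (UM K₁ K : ℝ) : Prop :=
  (K₁ < K ∧ K < V' UM) ∨ (CondH κ ∧ V' 0 < K ∧ K ≤ K₁)

/-- Periodic solution. -/
def IsPeriodicSol (u w : ℝ → ℝ) : Prop :=
  ∃ Z, 0 < Z ∧ ∀ z, u (z + Z) = u z ∧ w (z + Z) = w z

/-- Nonconstant pair of functions. -/
def Nonconst (u w : ℝ → ℝ) : Prop := ∃ z, u z ≠ u 0 ∨ w z ≠ w 0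

/-- Discriminant of the Jacobian at an equilibrium `(u,0)`. -/
def discTV (V' κ : ℝ → ℝ) (τ K u μ : ℝ) : ℝ :=
  (g2TV κ τ u) ^ 2 * (hTV V' K μ u) ^ 2 + 4 * g1TV κ τ u * fdTV V' K u

/-- The eigenvalue `λ₊(u)`. -/
def lamP (V' κ : ℝ → ℝ) (τ K u μ : ℝ) : ℝ :=
  (g2TV κ τ u * hTV V' K μ u + Real.sqrt (discTV V' κ τ K u μ)) / 2

/-- The eigenvalue `λ₋(u)`. -/
def lamM (V' κ : ℝ → ℝ) (τ K u μ : ℝ) : ℝ :=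
  (g2TV κ τ u * hTV V' K μ u - Real.sqrt (discTV V' κ τ K u μ)) / 2

/-- `Z` is the minimal period of `(u,w)`. -/
def IsMinPeriod (u w : ℝ → ℝ) (Z : ℝ) : Prop :=
  0 < Z ∧ (∀ z, u (z + Z) = u z ∧ w (z + Z) = w z) ∧
  ∀ Z', 0 < Z' → (∀ z, u (z + Z') = u z ∧ w (z + Z') = w z) → Z ≤ Z'

/-!
Write (TV) as `u' = w`, `w' = F(u) + G_μ(u) w` with `F = g₁ f` and `G_μ = g₂ (f' + μ)`. Between two
zeros of `f` adjacent to `u₀` the force `F` points towards `u₀`. Let `q < u₀`; the case `q > u₀`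
follows from the reflection `u ↦ -u`. The orbit from `(q, 0)` enters the upper half plane forward in
time, and also backward in time after the reversal `(z, w) ↦ (-z, -w)`, which replaces `G_μ` by
`-G_μ`. So there are two ascending orbits, and if both return to the axis `w = 0` at the same point
they join to a closed orbit. Otherwise one of them outruns the other: it passes some line `u = s`
which the other one does not reach. By continuous dependence on `μ`, the sets of `μ` for which the
first, respectively the second, orbit outruns the other are open. They are disjoint, and nonempty
because `G_μ` has constant sign for large `|μ|`. As `ℝ` is connected, they do not cover `ℝ`.

It remains to rule out that both orbits extend all the way to the far end `b` of the interval. In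
`D₁` this is a comparison in the phase plane, where a heteroclinic orbit serves as a barrier.
In `D₂` (after the reflection, the far end is the vanishing headway `u = 0`) the point is that
condition (H) says that the primitive of `g₂` diverges at `0`: either the force or the damping then
has infinite effect near `0`, and turns one of the two orbits back.
-/
section GlobalExistence

variable {E : Type*} [NormedAddCommGroup E] [NormedSpace ℝ E]

lemma norm_integral_le_of_norm_le_exp {h : ℝ → E} {lam M : ℝ} (hlam : 0 < lam) (hM : 0 ≤ M)
    (hh : ∀ s, ‖h s‖ ≤ M * Real.exp (lam * |s|)) (t : ℝ) :
    ‖∫ s in 0..t, h s‖ ≤ M / lam * Real.exp (lam * |t|) := by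
  have forward : ∀ {k : ℝ → E} {T : ℝ}, 0 ≤ T → (∀ s, ‖k s‖ ≤ M * Real.exp (lam * |s|)) →
      ‖∫ s in 0..T, k s‖ ≤ M / lam * Real.exp (lam * T) := by
    intro k T hT hk
    have hderiv : ∀ s ∈ uIcc 0 T, HasDerivAt (fun s => M / lam * Real.exp (lam * s))
        (M * Real.exp (lam * s)) s := fun s _ => by
      refine (((hasDerivAt_id s).const_mul lam).exp.const_mul (M / lam)).congr_deriv ?_
      simp only [id_eq]
      field_simp
    calc ‖∫ s in 0..T, k s‖ ≤ ∫ s in 0..T, M * Real.exp (lam * s) :=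
          intervalIntegral.norm_integral_le_of_norm_le hT
            (ae_of_all _ fun s hs => by simpa only [abs_of_pos hs.1] using hk s)
            (Continuous.intervalIntegrable (by fun_prop) _ _)
      _ = M / lam * Real.exp (lam * T) - M / lam := by
          rw [intervalIntegral.integral_eq_sub_of_hasDerivAt hderiv
            (Continuous.intervalIntegrable (by fun_prop) _ _)]
          simp
      _ ≤ M / lam * Real.exp (lam * T) := by
          have : 0 ≤ M / lam := by positivity
          linarith
  rcases le_total 0 t with ht | ht
  · simpa only [abs_of_nonneg ht] using forward ht hh
  · have hneg : ∫ s in 0..t, h s = -∫ s in 0..-t, h (-s) := by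
      rw [intervalIntegral.integral_comp_neg, neg_neg, neg_zero, intervalIntegral.integral_symm]
    rw [hneg, norm_neg, abs_of_nonpos ht]
    exact forward (neg_nonneg.2 ht) fun s => by simpa only [abs_neg] using hh (-s)

open BoundedContinuousFunction

/-- The curve `exp (lam |t|) • β t` of exponential growth represented by a bounded function `β`.
Bielecki's trick: with this weight, Picard iteration for a `K`-Lipschitz field is a contraction
of the bounded functions as soon as `K < lam`, so that its fixed point is a global solution. -/
def expCurve (lam : ℝ) (β : ℝ →ᵇ E) (t : ℝ) : E := Real.exp (lam * |t|) • β t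

lemma continuous_expCurve (lam : ℝ) (β : ℝ →ᵇ E) : Continuous (expCurve lam β) := by
  unfold expCurve
  fun_prop

lemma norm_expCurve_sub_le (lam : ℝ) (β γ : ℝ →ᵇ E) (t : ℝ) :
    ‖expCurve lam β t - expCurve lam γ t‖ ≤ dist β γ * Real.exp (lam * |t|) := by
  rw [expCurve, expCurve, ← smul_sub, norm_smul, Real.norm_eq_abs, Real.abs_exp, ← dist_eq_norm,
    mul_comm]
  exact mul_le_mul_of_nonneg_right (dist_coe_le_dist t) (Real.exp_pos _).le

lemma norm_comp_expCurve_le {X : E → E} {K : NNReal} (hX : LipschitzWith K X) {lam : ℝ}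
    (hlam : 0 ≤ lam) (β : ℝ →ᵇ E) (t : ℝ) :
    ‖X (expCurve lam β t)‖ ≤ (K * ‖β‖ + ‖X 0‖) * Real.exp (lam * |t|) := by
  have norm_le : ‖expCurve lam β t‖ ≤ ‖β‖ * Real.exp (lam * |t|) := by
    simpa [expCurve] using norm_expCurve_sub_le lam β 0 t
  have one_le : 1 ≤ Real.exp (lam * |t|) := Real.one_le_exp (by positivity)
  calc ‖X (expCurve lam β t)‖ ≤ ‖X (expCurve lam β t) - X 0‖ + ‖X 0‖ := by
        simpa only [sub_add_cancel] using norm_add_le (X (expCurve lam β t) - X 0) (X 0)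
    _ ≤ K * (‖β‖ * Real.exp (lam * |t|)) + ‖X 0‖ * Real.exp (lam * |t|) := by
        refine add_le_add ?_ (le_mul_of_one_le_right (norm_nonneg _) one_le)
        refine (hX.norm_sub_le _ _).trans ?_
        rw [sub_zero]
        exact mul_le_mul_of_nonneg_left norm_le K.coe_nonneg
    _ = (K * ‖β‖ + ‖X 0‖) * Real.exp (lam * |t|) := by ring

lemma exists_expCurve_eq_integral {X : E → E} {K : NNReal} (hX : LipschitzWith K X) {lam : ℝ}
    (hlam : 0 < lam) (x₀ : E) (β : ℝ →ᵇ E) :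
    ∃ γ : ℝ →ᵇ E, ∀ t, expCurve lam γ t = x₀ + ∫ s in 0..t, X (expCurve lam β s) := by
  have hcont : Continuous fun t => ∫ s in 0..t, X (expCurve lam β s) :=
    intervalIntegral.continuous_primitive (fun a b =>
      (hX.continuous.comp (continuous_expCurve lam β)).intervalIntegrable a b) 0
  refine ⟨.ofNormedAddCommGroup
    (fun t => Real.exp (-(lam * |t|)) • (x₀ + ∫ s in 0..t, X (expCurve lam β s)))
    (by fun_prop) (‖x₀‖ + (K * ‖β‖ + ‖X 0‖) / lam) fun t => ?_, fun t => ?_⟩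
  · rw [norm_smul, Real.norm_eq_abs, Real.abs_exp, Real.exp_neg, inv_mul_le_iff₀ (Real.exp_pos _)]
    have hint := norm_integral_le_of_norm_le_exp hlam (by positivity)
      (norm_comp_expCurve_le hX hlam.le β) t
    have := le_mul_of_one_le_left (norm_nonneg x₀)
      (Real.one_le_exp (x := lam * |t|) (by positivity))
    linarith [norm_add_le x₀ (∫ s in 0..t, X (expCurve lam β s))]
  · simp [expCurve, smul_smul, ← Real.exp_add]

lemma exists_forall_eq_add_integral [CompleteSpace E] {X : E → E} {K : NNReal}
    (hX : LipschitzWith K X) (x₀ : E) :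
    ∃ α : ℝ → E, Continuous α ∧ ∀ t, α t = x₀ + ∫ s in 0..t, X (α s) := by
  have hlam : (0 : ℝ) < K + 1 := by positivity
  have X_cont : ∀ β, Continuous fun s => X (expCurve (K + 1) β s) := fun β =>
    hX.continuous.comp (continuous_expCurve _ β)
  choose Φ hΦ using exists_expCurve_eq_integral hX hlam x₀
  have contracting : ContractingWith (K / (K + 1)) Φ := by
    refine ⟨(div_lt_one (by positivity)).2 (lt_add_one K),
      LipschitzWith.of_dist_le_mul fun β γ => (dist_le (by positivity)).2 fun t => ?_⟩
    have hdiff : ∀ s, ‖X (expCurve (K + 1) β s) - X (expCurve (K + 1) γ s)‖ ≤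
        K * dist β γ * Real.exp ((K + 1) * |s|) := fun s => by
      rw [mul_assoc]
      exact (hX.norm_sub_le _ _).trans
        (mul_le_mul_of_nonneg_left (norm_expCurve_sub_le _ β γ s) K.coe_nonneg)
    have hint := norm_integral_le_of_norm_le_exp hlam (by positivity) hdiff t
    rw [intervalIntegral.integral_sub ((X_cont β).intervalIntegrable _ _)
      ((X_cont γ).intervalIntegrable _ _), ← add_sub_add_left_eq_sub _ _ x₀, ← hΦ, ← hΦ, expCurve,
      expCurve, ← smul_sub, norm_smul, Real.norm_eq_abs, Real.abs_exp, mul_comm] at hint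
    rw [dist_eq_norm]
    refine (le_of_mul_le_mul_right hint (Real.exp_pos _)).trans_eq ?_
    push_cast
    ring
  refine ⟨_, continuous_expCurve (K + 1) (contracting.fixedPoint Φ), fun t => ?_⟩
  rw [← hΦ, contracting.fixedPoint_isFixedPt]

theorem exists_isIntegralCurve_of_lipschitzWith [CompleteSpace E] {X : E → E} {K : NNReal}
    (hX : LipschitzWith K X) (x₀ : E) :
    ∃ α : ℝ → E, α 0 = x₀ ∧ IsIntegralCurve α fun _ => X := by
  obtain ⟨α, hcont, hα⟩ := exists_forall_eq_add_integral hX x₀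
  refine ⟨α, by simpa using hα 0, fun t => ?_⟩
  have := ((hX.continuous.comp hcont).integral_hasStrictDerivAt 0 t).hasDerivAt.const_add x₀
  exact this.congr_of_eventuallyEq (Eventually.of_forall hα)

end GlobalExistence

section Lienard

/-- `(u, w)` solves the Liénard-type system `u' = w`, `w' = f(u) + g(u) w` at every time of `s`;
for global solutions `s = univ`. -/
def IsLienardSolOn (f g : ℝ → ℝ) (s : Set ℝ) (u w : ℝ → ℝ) : Prop :=
  ∀ z ∈ s, HasDerivAt u (w z) z ∧ HasDerivAt w (f (u z) + g (u z) * w z) z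

/-- The regularity of `f` and `g` under which the system `u' = w`, `w' = f(u) + g(u) w` has
unique global solutions: `f` is Lipschitz while `g` is only continuous and bounded. -/
structure LienardRegular (f g : ℝ → ℝ) : Prop where
  lipschitz : ∃ L, LipschitzWith L f
  continuous : Continuous g
  bounded : ∃ M : NNReal, ∀ x, |g x| ≤ M

/-- The primitive of `g` vanishing at `a`. -/
def primitive (g : ℝ → ℝ) (a x : ℝ) : ℝ := ∫ t in a..x, g t

/-- The Liénard plane field `(u, y) ↦ (y + G(u), f(u))`, with `G` the primitive of `g` vanishing
at `a`. The substitution `y = w - G(u)` turns the system into its integral curves; this field is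
Lipschitz although `g` need not be. -/
def lienardField (f g : ℝ → ℝ) (a : ℝ) (p : ℝ × ℝ) : ℝ × ℝ := (p.2 + primitive g a p.1, f p.1)

/-- The Liénard coordinates `(u, w - G(u))` of a curve `(u, w)`. -/
def lienardCurve (g : ℝ → ℝ) (a : ℝ) (u w : ℝ → ℝ) (z : ℝ) : ℝ × ℝ :=
  (u z, w z - primitive g a (u z))

variable {f g u w u' w' : ℝ → ℝ} {s t : Set ℝ}

@[simp] lemma primitive_self (g : ℝ → ℝ) (a : ℝ) : primitive g a a = 0 :=
  intervalIntegral.integral_same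

lemma hasDerivAt_primitive (hg : Continuous g) (a x : ℝ) : HasDerivAt (primitive g a) (g x) x :=
  (hg.integral_hasStrictDerivAt a x).hasDerivAt

lemma lipschitzWith_primitive (hg : Continuous g) {M : NNReal} (hM : ∀ x, |g x| ≤ M) (a : ℝ) :
    LipschitzWith M (primitive g a) := by
  refine lipschitzWith_of_nnnorm_deriv_le
    (fun x => (hasDerivAt_primitive hg a x).differentiableAt) fun x => ?_
  rw [(hasDerivAt_primitive hg a x).deriv]
  exact_mod_cast hM x

lemma abs_primitive_sub_le (hg : Continuous g) {h : ℝ → ℝ} (hh : Continuous h) {ε : ℝ}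
    (hε : ∀ x, |h x - g x| ≤ ε) (a x : ℝ) :
    |primitive h a x - primitive g a x| ≤ ε * |x - a| := by
  rw [primitive, primitive, ← intervalIntegral.integral_sub (hh.intervalIntegrable _ _)
    (hg.intervalIntegrable _ _)]
  exact intervalIntegral.norm_integral_le_of_norm_le_const (f := fun t => h t - g t)
    fun t _ => hε t

lemma lipschitzWith_lienardField {L M : NNReal} (hf : LipschitzWith L f) (hg : Continuous g)
    (hM : ∀ x, |g x| ≤ M) (a : ℝ) : LipschitzWith (max (1 + M) L) (lienardField f g a) := by
  have := (LipschitzWith.prod_snd.add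
    ((lipschitzWith_primitive hg hM a).comp LipschitzWith.prod_fst)).prodMk
    (hf.comp LipschitzWith.prod_fst)
  rwa [mul_one, mul_one] at this

lemma LienardRegular.exists_lipschitzWith (hfg : LienardRegular f g) (a : ℝ) :
    ∃ K, LipschitzWith K (lienardField f g a) :=
  let ⟨_, hL⟩ := hfg.lipschitz
  let ⟨_, hM⟩ := hfg.bounded
  ⟨_, lipschitzWith_lienardField hL hfg.continuous hM a⟩

lemma IsLienardSolOn.mono (h : IsLienardSolOn f g s u w) (hts : t ⊆ s) :
    IsLienardSolOn f g t u w :=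
  fun z hz => h z (hts hz)

lemma IsLienardSolOn.reverse (h : IsLienardSolOn f g s u w) (hts : MapsTo Neg.neg t s) :
    IsLienardSolOn f (-g) t (fun z => u (-z)) (fun z => -w (-z)) := by
  intro z hz
  obtain ⟨hu, hw⟩ := h (-z) (hts hz)
  refine ⟨by simpa [Function.comp_def] using hu.scomp z (hasDerivAt_neg z), ?_⟩
  exact (hw.scomp z (hasDerivAt_neg z)).neg.congr_deriv (by simp)

lemma IsLienardSolOn.comp_add_const (h : IsLienardSolOn f g s u w) (Z : ℝ)
    (hts : MapsTo (· + Z) t s) :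
    IsLienardSolOn f g t (fun z => u (z + Z)) (fun z => w (z + Z)) :=
  fun z hz => ⟨(h _ (hts hz)).1.comp_add_const z Z, (h _ (hts hz)).2.comp_add_const z Z⟩

lemma IsLienardSolOn.congr {f' g' : ℝ → ℝ} (h : IsLienardSolOn f g s u w)
    (hf : ∀ z ∈ s, f (u z) = f' (u z)) (hg : ∀ z ∈ s, g (u z) = g' (u z)) :
    IsLienardSolOn f' g' s u w :=
  fun z hz => ⟨(h z hz).1, by rw [← hf z hz, ← hg z hz]; exact (h z hz).2⟩

lemma IsLienardSolOn.reflect (h : IsLienardSolOn f g s u w) :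
    IsLienardSolOn (fun x => -f (-x)) (fun x => g (-x)) s (-u) (-w) :=
  fun z hz => ⟨(h z hz).1.neg, (h z hz).2.neg.congr_deriv (by simp; ring)⟩

lemma IsLienardSolOn.continuousOn_fst (h : IsLienardSolOn f g s u w) : ContinuousOn u s :=
  HasDerivAt.continuousOn fun z hz => (h z hz).1

lemma IsLienardSolOn.continuousOn_snd (h : IsLienardSolOn f g s u w) : ContinuousOn w s :=
  HasDerivAt.continuousOn fun z hz => (h z hz).2

lemma IsLienardSolOn.hasDerivAt_lienardCurve (h : IsLienardSolOn f g s u w) (hg : Continuous g)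
    (a : ℝ) {z : ℝ} (hz : z ∈ s) :
    HasDerivAt (lienardCurve g a u w) (lienardField f g a (lienardCurve g a u w z)) z := by
  obtain ⟨hu, hw⟩ := h z hz
  have hy : HasDerivAt (fun z => w z - primitive g a (u z)) (f (u z)) z :=
    (hw.sub ((hasDerivAt_primitive hg a (u z)).comp z hu)).congr_deriv (by ring)
  exact (hu.prodMk hy).congr_deriv (by simp [lienardField, lienardCurve])

lemma lienardCurve_eq_iff {a x y : ℝ} :
    lienardCurve g a u w x = lienardCurve g a u' w' y ↔ u x = u' y ∧ w x = w' y := by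
  simp only [lienardCurve, Prod.mk.injEq]
  exact and_congr_right fun h => by rw [h, sub_left_inj]

theorem LienardRegular.exists_isLienardSolOn (hfg : LienardRegular f g) (a d : ℝ) :
    ∃ u w, IsLienardSolOn f g univ u w ∧ u 0 = a ∧ w 0 = d := by
  obtain ⟨K, hK⟩ := hfg.exists_lipschitzWith a
  obtain ⟨α, hα0, hα⟩ := exists_isIntegralCurve_of_lipschitzWith hK (a, d)
  refine ⟨fun z => (α z).1, fun z => (α z).2 + primitive g a (α z).1, fun z _ => ?_,
    by simp [hα0], by simp [hα0]⟩
  have hu : HasDerivAt (fun z => (α z).1) ((α z).2 + primitive g a (α z).1) z := by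
    simpa [lienardField] using (hα z).hasFDerivAt.fst.hasDerivAt
  have hy : HasDerivAt (fun z => (α z).2) (f (α z).1) z := by
    simpa [lienardField] using (hα z).hasFDerivAt.snd.hasDerivAt
  exact ⟨hu, hy.add ((hasDerivAt_primitive hfg.continuous a _).comp z hu)⟩

theorem IsLienardSolOn.eqOn_Icc (hfg : LienardRegular f g) {a b : ℝ}
    (h : IsLienardSolOn f g (Icc a b) u w) (h' : IsLienardSolOn f g (Icc a b) u' w')
    (hu : u a = u' a) (hw : w a = w' a) : ∀ z ∈ Icc a b, u z = u' z ∧ w z = w' z := by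
  obtain ⟨K, hK⟩ := hfg.exists_lipschitzWith 0
  have hd := fun {z} => h.hasDerivAt_lienardCurve hfg.continuous 0 (z := z)
  have hd' := fun {z} => h'.hasDerivAt_lienardCurve hfg.continuous 0 (z := z)
  have heq := ODE_solution_unique (v := fun _ => lienardField f g 0) (fun _ => hK)
    (HasDerivAt.continuousOn fun z hz => hd hz)
    (fun z hz => (hd (Ico_subset_Icc_self hz)).hasDerivWithinAt)
    (HasDerivAt.continuousOn fun z hz => hd' hz)
    (fun z hz => (hd' (Ico_subset_Icc_self hz)).hasDerivWithinAt)
    (lienardCurve_eq_iff.2 ⟨hu, hw⟩)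
  exact fun z hz => lienardCurve_eq_iff.1 (heq hz)

theorem IsLienardSolOn.eq_of_eq (hfg : LienardRegular f g)
    (h : IsLienardSolOn f g univ u w) (h' : IsLienardSolOn f g univ u' w') {z₀ : ℝ}
    (hu : u z₀ = u' z₀) (hw : w z₀ = w' z₀) (z : ℝ) : u z = u' z ∧ w z = w' z := by
  obtain ⟨K, hK⟩ := hfg.exists_lipschitzWith 0
  have heq := ODE_solution_unique_univ (v := fun _ => lienardField f g 0) (s := fun _ => univ)
    (t₀ := z₀) (fun _ => hK.lipschitzOnWith)
    (fun z => ⟨h.hasDerivAt_lienardCurve hfg.continuous 0 (mem_univ z), mem_univ _⟩)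
    (fun z => ⟨h'.hasDerivAt_lienardCurve hfg.continuous 0 (mem_univ z), mem_univ _⟩)
    (lienardCurve_eq_iff.2 ⟨hu, hw⟩)
  exact lienardCurve_eq_iff.1 (congrFun heq z)

section Dependence

variable {h : ℝ → ℝ} {L M : NNReal} {T ε C : ℝ}

lemma dist_lienardCurve_le (hf : LipschitzWith L f) (hg : Continuous g) (hh : Continuous h)
    (hM : ∀ x, |h x| ≤ M) (hε : ∀ x, |h x - g x| ≤ ε) (hε0 : 0 ≤ ε)
    (hu : IsLienardSolOn f g univ u w) (hu' : IsLienardSolOn f h univ u' w')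
    (h0 : u' 0 = u 0) (h0' : w' 0 = w 0) (hC : ∀ z ∈ Icc 0 T, |u z - u 0| ≤ C) :
    ∀ z ∈ Icc 0 T, dist (lienardCurve g (u 0) u w z) (lienardCurve h (u 0) u' w' z) ≤
      gronwallBound 0 (max (1 + M) L : NNReal) (ε * C) z := by
  intro z hz
  have hd := fun z => hu.hasDerivAt_lienardCurve hg (u 0) (mem_univ z)
  have hd' := fun z => hu'.hasDerivAt_lienardCurve hh (u 0) (mem_univ z)
  have approx : ∀ t ∈ Ico 0 T, dist (lienardField f g (u 0) (lienardCurve g (u 0) u w t))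
      (lienardField f h (u 0) (lienardCurve g (u 0) u w t)) ≤ ε * C := by
    intro t ht
    have hle := (abs_primitive_sub_le hg hh hε (u 0) (u t)).trans
      (mul_le_mul_of_nonneg_left (hC t (Ico_subset_Icc_self ht)) hε0)
    rw [abs_sub_comm] at hle
    simp only [lienardField, lienardCurve, Prod.dist_eq, Real.dist_eq, add_sub_add_left_eq_sub,
      sub_self, abs_zero]
    exact max_le hle ((abs_nonneg _).trans hle)
  simpa using dist_le_of_approx_trajectories_ODE (v := fun _ => lienardField f h (u 0)) (δ := 0)
    (εg := 0) (fun _ => lipschitzWith_lienardField hf hh hM (u 0))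
    (HasDerivAt.continuousOn fun t _ => hd t) (fun t _ => (hd t).hasDerivWithinAt) approx
    (HasDerivAt.continuousOn fun t _ => hd' t) (fun t _ => (hd' t).hasDerivWithinAt)
    (fun t _ => (dist_self _).le) (by simp [lienardCurve, h0, h0']) z hz

lemma abs_sub_le_of_dist_lienardCurve_le {a z D : ℝ} (hg : Continuous g) (hh : Continuous h)
    (hM : ∀ x, |h x| ≤ M) (hε : ∀ x, |h x - g x| ≤ ε)
    (hD : dist (lienardCurve g a u w z) (lienardCurve h a u' w' z) ≤ D) :
    |u' z - u z| ≤ D ∧ |w' z - w z| ≤ D + M * D + ε * |u z - a| := by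
  rw [dist_comm, Prod.dist_eq] at hD
  have hdu : |u' z - u z| ≤ D := (le_max_left _ _).trans hD
  have hdy : |(w' z - primitive h a (u' z)) - (w z - primitive g a (u z))| ≤ D :=
    (le_max_right _ _).trans hD
  have hlip : |primitive h a (u' z) - primitive h a (u z)| ≤ M * D :=
    ((lipschitzWith_primitive hh hM a).dist_le_mul _ _).trans
      (mul_le_mul_of_nonneg_left hdu M.coe_nonneg)
  have hprim := abs_primitive_sub_le hg hh hε a (u z)
  refine ⟨hdu, ?_⟩
  calc |w' z - w z| = |((w' z - primitive h a (u' z)) - (w z - primitive g a (u z))) +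
        (primitive h a (u' z) - primitive h a (u z)) +
        (primitive h a (u z) - primitive g a (u z))| := by ring_nf
    _ ≤ _ := (abs_add_three _ _ _).trans (add_le_add_three hdy hlip hprim)

theorem IsLienardSolOn.exists_forall_abs_sub_lt (hfg : LienardRegular f g)
    (hu : IsLienardSolOn f g univ u w) (T : ℝ) {η : ℝ} (hη : 0 < η) :
    ∃ ε > 0, ∀ h : ℝ → ℝ, Continuous h → (∀ x, |h x - g x| ≤ ε) →
      ∀ u' w', IsLienardSolOn f h univ u' w' → u' 0 = u 0 → w' 0 = w 0 →
        ∀ z ∈ Icc 0 T, |u' z - u z| < η ∧ |w' z - w z| < η := by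
  obtain ⟨L, hL⟩ := hfg.lipschitz
  obtain ⟨M, hM⟩ := hfg.bounded
  obtain ⟨C, hC⟩ := isCompact_Icc.exists_bound_of_continuousOn (s := Icc 0 T)
    ((hu.continuousOn_fst.mono (subset_univ _)).sub (continuousOn_const (c := u 0)))
  replace hC : ∀ z ∈ Icc 0 T, |u z - u 0| ≤ C := hC
  set K : NNReal := max (1 + (M + 1)) L
  have bound_small : ∀ᶠ ε in nhds (0 : ℝ),
      gronwallBound 0 K (ε * C) T + ((M + 1 : NNReal) * gronwallBound 0 K (ε * C) T + ε * C) <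
        η := by
    have hcont : Continuous fun ε : ℝ => gronwallBound 0 K (ε * C) T :=
      (gronwallBound_continuous_ε 0 K T).comp (continuous_mul_const C)
    refine (Continuous.tendsto' (by fun_prop) 0 0 ?_).eventually (gt_mem_nhds hη)
    simp [gronwallBound_ε0_δ0]
  obtain ⟨ε, ⟨hε, hε1⟩, hε0⟩ :=
    (((bound_small.and (gt_mem_nhds zero_lt_one)).filter_mono nhdsWithin_le_nhds).and
      (self_mem_nhdsWithin (s := Ioi (0 : ℝ)))).exists
  refine ⟨ε, hε0, fun h hh hclose u' w' hu' h0 h0' z hz => ?_⟩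
  have hM' : ∀ x, |h x| ≤ ((M + 1 : NNReal) : ℝ) := fun x => by
    have := abs_add_le (h x - g x) (g x)
    rw [sub_add_cancel] at this
    push_cast
    linarith [hclose x, hM x]
  have hC0 : 0 ≤ ε * C := mul_nonneg hε0.le ((abs_nonneg _).trans (hC z hz))
  have hdist := (dist_lienardCurve_le hL hfg.continuous hh hM' hclose hε0.le hu hu' h0 h0' hC z
    hz).trans (gronwallBound_mono le_rfl hC0 K.coe_nonneg hz.2)
  obtain ⟨hdu, hdw⟩ := abs_sub_le_of_dist_lienardCurve_le hfg.continuous hh hM' hclose hdist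
  have hCz := mul_le_mul_of_nonneg_left (hC z hz) hε0.le
  have := mul_nonneg (M + 1).coe_nonneg (dist_nonneg.trans hdist)
  exact ⟨by linarith, by linarith⟩

end Dependence

end Lienard

section Calculus

variable {v v' w : ℝ → ℝ} {D : Set ℝ} {a b d m t : ℝ}

lemma monotoneOn_of_hasDerivAt_nonneg (hD : Convex ℝ D) (hv : ∀ x ∈ D, HasDerivAt v (v' x) x)
    (hnonneg : ∀ x ∈ interior D, 0 ≤ v' x) : MonotoneOn v D :=
  monotoneOn_of_hasDerivWithinAt_nonneg hD (HasDerivAt.continuousOn hv)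
    (fun x hx => (hv x (interior_subset hx)).hasDerivWithinAt) hnonneg

lemma antitoneOn_of_hasDerivAt_nonpos (hD : Convex ℝ D) (hv : ∀ x ∈ D, HasDerivAt v (v' x) x)
    (hnonpos : ∀ x ∈ interior D, v' x ≤ 0) : AntitoneOn v D :=
  antitoneOn_of_hasDerivWithinAt_nonpos hD (HasDerivAt.continuousOn hv)
    (fun x hx => (hv x (interior_subset hx)).hasDerivWithinAt) hnonpos

lemma strictMonoOn_of_hasDerivAt_pos (hD : Convex ℝ D) (hv : ∀ x ∈ D, HasDerivAt v (v' x) x)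
    (hpos : ∀ x ∈ interior D, 0 < v' x) : StrictMonoOn v D :=
  strictMonoOn_of_hasDerivWithinAt_pos hD (HasDerivAt.continuousOn hv)
    (fun x hx => (hv x (interior_subset hx)).hasDerivWithinAt) hpos

lemma eventually_nhdsGT_pos_of_hasDerivAt (hw : HasDerivAt w d t) (h0 : w t = 0) (hd : 0 < d) :
    ∀ᶠ z in nhdsWithin t (Ioi t), 0 < w z := by
  have hslope := (hasDerivAt_iff_tendsto_slope_left_right.1 hw).2.eventually (lt_mem_nhds hd)
  filter_upwards [hslope, self_mem_nhdsWithin] with z hz htz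
  rw [slope_def_field, h0, sub_zero] at hz
  exact (div_pos_iff_of_pos_right (sub_pos.2 htz)).1 hz

lemma eventually_nhdsLT_neg_of_hasDerivAt (hw : HasDerivAt w d t) (h0 : w t = 0) (hd : 0 < d) :
    ∀ᶠ z in nhdsWithin t (Iio t), w z < 0 := by
  have hslope := (hasDerivAt_iff_tendsto_slope_left_right.1 hw).1.eventually (lt_mem_nhds hd)
  filter_upwards [hslope, self_mem_nhdsWithin] with z hz htz
  rw [slope_def_field, h0, sub_zero] at hz
  exact (div_pos_iff.1 hz).resolve_left (fun h => h.2.not_gt (sub_neg.2 htz)) |>.1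

lemma tendsto_atTop_of_hasDerivAt_ge (hm : 0 < m)
    (hv : ∀ᶠ z in atTop, HasDerivAt v (v' z) z ∧ m ≤ v' z) : Tendsto v atTop atTop := by
  obtain ⟨Z, hZ⟩ := eventually_atTop.1 hv
  have hmono : MonotoneOn (fun z => v z - m * z) (Ici Z) :=
    monotoneOn_of_hasDerivAt_nonneg (convex_Ici Z) (v' := fun z => v' z - m)
      (fun z hz => by simpa using (hZ z hz).1.fun_sub ((hasDerivAt_id z).const_mul m))
      (fun z hz => sub_nonneg.2 (hZ z (interior_subset hz)).2)
  refine tendsto_atTop_mono' atTop (f₁ := fun z => v Z - m * Z + m * z) ?_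
    (tendsto_atTop_add_const_left _ _ (tendsto_id.const_mul_atTop hm))
  filter_upwards [eventually_ge_atTop Z] with z hz
  have : v Z - m * Z ≤ v z - m * z := hmono self_mem_Ici hz hz
  linarith

lemma eq_zero_of_tendsto_of_tendsto_hasDerivAt {l l' : ℝ} (hv : ∀ z, HasDerivAt v (v' z) z)
    (hl : Tendsto v atTop (nhds l)) (hl' : Tendsto v' atTop (nhds l')) : l' = 0 := by
  rcases lt_trichotomy l' 0 with hneg | hzero | hpos
  · have : Tendsto (fun z => -v z) atTop atTop :=
      tendsto_atTop_of_hasDerivAt_ge (v' := fun z => -v' z) (m := -l' / 2) (by linarith) <| by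
        filter_upwards [hl'.eventually (gt_mem_nhds (show l' < l' / 2 by linarith))] with z hz
        exact ⟨(hv z).neg, by linarith⟩
    exact absurd hl.neg (not_tendsto_nhds_of_tendsto_atTop this _)
  · exact hzero
  · have : Tendsto v atTop atTop :=
      tendsto_atTop_of_hasDerivAt_ge (m := l' / 2) (by linarith) <| by
        filter_upwards [hl'.eventually (lt_mem_nhds (show l' / 2 < l' by linarith))] with z hz
        exact ⟨hv z, hz.le⟩
    exact absurd hl (not_tendsto_nhds_of_tendsto_atTop this _)

lemma tendsto_atTop_of_monotoneOn_Ici (hv : MonotoneOn v (Ici a)) :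
    Tendsto v atTop atTop ∨ ∃ l, Tendsto v atTop (nhds l) := by
  have hmono : Monotone fun z => v (max z a) := fun x y hxy =>
    hv (le_max_right x a) (le_max_right y a) (max_le_max_right a hxy)
  have hev : (fun z => v (max z a)) =ᶠ[atTop] v := by
    filter_upwards [eventually_ge_atTop a] with z hz
    rw [max_eq_left hz]
  exact (tendsto_atTop_of_monotone hmono).imp (·.congr' hev) fun ⟨l, hl⟩ => ⟨l, hl.congr' hev⟩

lemma exists_eq_zero_forall_pos (hw : Continuous w) (hpos : ∀ᶠ z in nhdsWithin a (Ioi a), 0 < w z)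
    (hab : a < b) (hb : w b ≤ 0) : ∃ T ∈ Ioc a b, w T = 0 ∧ ∀ z ∈ Ioo a T, 0 < w z := by
  obtain ⟨c, hac, hc⟩ := mem_nhdsGT_iff_exists_Ioo_subset.1 hpos
  have hcb : c ≤ b := not_lt.1 fun h => (hc ⟨hab, h⟩ : 0 < w b).not_ge hb
  obtain ⟨T, ⟨⟨hcT, hTb⟩, hwT⟩, hleast⟩ :=
    (isCompact_Icc.inter_right (isClosed_le hw continuous_const)).exists_isLeast
      (⟨b, ⟨hcb, le_rfl⟩, hb⟩ : (Icc c b ∩ {z | w z ≤ 0}).Nonempty)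
  have haT : a < T := lt_of_lt_of_le hac hcT
  have hwpos : ∀ z ∈ Ioo a T, 0 < w z := fun z hz => by
    rcases lt_or_ge z c with hzc | hcz
    · exact hc ⟨hz.1, hzc⟩
    · exact not_le.1 fun hle => hz.2.not_ge (hleast ⟨⟨hcz, hz.2.le.trans hTb⟩, hle⟩)
  have hge : 0 ≤ w T := closure_minimal (fun z hz => (hwpos z hz).le)
    (isClosed_le continuous_const hw) (closure_Ioo haT.ne ▸ right_mem_Icc.2 haT.le)
  exact ⟨T, ⟨haT, hTb⟩, le_antisymm hwT hge, hwpos⟩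

/-- An integrating factor turns the differential inequality into monotonicity. -/
lemma neg_of_hasDerivAt_le_mul {φ : ℝ → ℝ} (hD : Convex ℝ D) (hopen : IsOpen D)
    (hφ : ContinuousOn φ D) (hv : ∀ x ∈ D, HasDerivAt v (v' x) x)
    (hle : ∀ x ∈ D, v' x ≤ φ x * v x) (ha : a ∈ D) (hb : b ∈ D) (hab : a ≤ b) (hva : v a < 0) :
    v b < 0 := by
  have hsub : ∀ {x}, x ∈ D → uIcc a x ⊆ D := fun hx => hD.ordConnected.uIcc_subset ha hx
  have hΦ : ∀ x ∈ D, HasDerivAt (fun x => ∫ t in a..x, φ t) (φ x) x := fun x hx =>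
    intervalIntegral.integral_hasDerivAt_right
      ((hφ.mono (hsub hx)).intervalIntegrable)
      (hφ.stronglyMeasurableAtFilter hopen x hx) (hφ.continuousAt (hopen.mem_nhds hx))
  have hanti : AntitoneOn (fun x => Real.exp (-∫ t in a..x, φ t) * v x) D := by
    refine antitoneOn_of_hasDerivAt_nonpos hD
      (fun x hx => (hΦ x hx).fun_neg.exp.fun_mul (hv x hx)) fun x hx => ?_
    have := mul_nonneg (Real.exp_pos (-∫ t in a..x, φ t)).le
      (sub_nonneg.2 (hle x (interior_subset hx)))
    linarith
  have := hanti ha hb hab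
  simp only [intervalIntegral.integral_same, neg_zero, Real.exp_zero, one_mul] at this
  exact neg_of_mul_neg_right (this.trans_lt hva) (Real.exp_pos _).le

end Calculus

section Energy

variable {f g u w : ℝ → ℝ} {s : Set ℝ}

lemma IsLienardSolOn.strictMonoOn (h : IsLienardSolOn f g s u w) (hs : Convex ℝ s)
    (hw : ∀ z ∈ interior s, 0 < w z) : StrictMonoOn u s :=
  strictMonoOn_of_hasDerivAt_pos hs (fun z hz => (h z hz).1) hw

lemma IsLienardSolOn.hasDerivAt_energy (h : IsLienardSolOn f g s u w) (hf : Continuous f) (a : ℝ)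
    {z : ℝ} (hz : z ∈ s) :
    HasDerivAt (fun z => w z ^ 2 / 2 - primitive f a (u z)) (g (u z) * w z ^ 2) z :=
  ((((h z hz).2.pow 2).div_const 2).sub
    ((hasDerivAt_primitive hf a (u z)).comp z (h z hz).1)).congr_deriv (by norm_num; ring)

lemma IsLienardSolOn.monotoneOn_energy (h : IsLienardSolOn f g s u w) (hf : Continuous f)
    (hs : Convex ℝ s) (hg : ∀ z ∈ interior s, 0 ≤ g (u z)) (a : ℝ) :
    MonotoneOn (fun z => w z ^ 2 / 2 - primitive f a (u z)) s :=
  monotoneOn_of_hasDerivAt_nonneg hs (fun _ hz => h.hasDerivAt_energy hf a hz)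
    fun z hz => mul_nonneg (hg z hz) (sq_nonneg _)

lemma IsLienardSolOn.antitoneOn_energy (h : IsLienardSolOn f g s u w) (hf : Continuous f)
    (hs : Convex ℝ s) (hg : ∀ z ∈ interior s, g (u z) ≤ 0) (a : ℝ) :
    AntitoneOn (fun z => w z ^ 2 / 2 - primitive f a (u z)) s :=
  antitoneOn_of_hasDerivAt_nonpos hs (fun _ hz => h.hasDerivAt_energy hf a hz)
    fun z hz => mul_nonpos_of_nonpos_of_nonneg (hg z hz) (sq_nonneg _)

end Energy

section Ascent

/-- `F` drives points of `[q, b)` towards `m`: it is positive on `[q, m)`, negative on `(m, b)`,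
and has a simple zero at `m`. Lipschitz continuity is required only away from `b`, where `F` may
be singular. -/
structure IsRestoringForce (F : ℝ → ℝ) (q m b : ℝ) : Prop where
  left_lt : q < m
  lt_right : m < b
  lipschitzOnWith : ∀ s < b, ∃ L, LipschitzOnWith L F (Icc q s)
  pos : ∀ x ∈ Ico q m, 0 < F x
  zero : F m = 0
  neg : ∀ x ∈ Ioo m b, F x < 0
  hasDerivAt : ∃ d < 0, HasDerivAt F d m

/-- The restriction of `H` to `[q, s]`, extended by constants. Replacing `F` and `G` by their
clamped versions makes all orbits global without changing them inside the strip `[q, s]`. -/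
def clampExt (H : ℝ → ℝ) (q s x : ℝ) : ℝ := H (max q (min s x))

/-- The global orbit starting at `(q, 0)` of the system clamped to the strip `[q, s]`. -/
structure IsClampedOrbit (F G : ℝ → ℝ) (q s : ℝ) (u w : ℝ → ℝ) : Prop where
  sol : IsLienardSolOn (clampExt F q s) (clampExt G q s) univ u w
  fst_zero : u 0 = q
  snd_zero : w 0 = 0

/-- An orbit segment starting at `(q, 0)` that stays in the upper half plane on `(0, T]`. -/
structure IsAscent (F G : ℝ → ℝ) (q : ℝ) (u w : ℝ → ℝ) (T : ℝ) : Prop where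
  time_pos : 0 < T
  sol : IsLienardSolOn F G (Icc 0 T) u w
  fst_zero : u 0 = q
  snd_zero : w 0 = 0
  snd_pos : ∀ z ∈ Ioc 0 T, 0 < w z

/-- The orbit starting at `(q, 0)` reaches the line `u = s` within the upper half plane. -/
def Reaches (F G : ℝ → ℝ) (q s : ℝ) : Prop := ∃ u w T, IsAscent F G q u w T ∧ u T = s

variable {F G H u w u' w' : ℝ → ℝ} {q m b s s' T T' : ℝ}

lemma clampExt_of_mem {x : ℝ} (hx : x ∈ Icc q s) : clampExt H q s x = H x := by
  rw [clampExt, min_eq_right hx.2, max_eq_right hx.1]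

lemma clamp_mem_Icc (hqs : q ≤ s) (x : ℝ) : max q (min s x) ∈ Icc q s :=
  ⟨le_max_left _ _, max_le hqs (min_le_left _ _)⟩

lemma lipschitzWith_clampExt {L : NNReal} (hH : LipschitzOnWith L H (Icc q s)) (hqs : q ≤ s) :
    LipschitzWith L (clampExt H q s) := by
  have hclamp : LipschitzWith 1 fun x => max q (min s x) :=
    (LipschitzWith.id.const_min s).const_max q
  have hcomp := hH.comp (hclamp.lipschitzOnWith (s := univ)) fun x _ => clamp_mem_Icc hqs x
  rwa [mul_one, lipschitzOnWith_univ] at hcomp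

lemma continuous_clampExt (hH : ContinuousOn H (Icc q s)) (hqs : q ≤ s) :
    Continuous (clampExt H q s) :=
  hH.comp_continuous (by fun_prop) (clamp_mem_Icc hqs)

lemma exists_abs_clampExt_le (hH : ContinuousOn H (Icc q s)) (hqs : q ≤ s) :
    ∃ M : NNReal, ∀ x, |clampExt H q s x| ≤ M :=
  let ⟨C, hC⟩ := isCompact_Icc.exists_bound_of_continuousOn hH
  ⟨C.toNNReal, fun x => (hC _ (clamp_mem_Icc hqs x)).trans (Real.le_coe_toNNReal C)⟩

lemma IsRestoringForce.lienardRegular_clampExt (hF : IsRestoringForce F q m b)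
    (hG : ContinuousOn G (Ico q b)) (hqs : q ≤ s) (hsb : s < b) :
    LienardRegular (clampExt F q s) (clampExt G q s) := by
  have hG' := hG.mono (Icc_subset_Ico_right hsb)
  exact ⟨(hF.lipschitzOnWith s hsb).imp fun _ hL => lipschitzWith_clampExt hL hqs,
    continuous_clampExt hG' hqs, exists_abs_clampExt_le hG' hqs⟩

lemma IsRestoringForce.exists_isClampedOrbit (hF : IsRestoringForce F q m b)
    (hG : ContinuousOn G (Ico q b)) (hqs : q ≤ s) (hsb : s < b) :
    ∃ u w, IsClampedOrbit F G q s u w :=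
  let ⟨u, w, h, hu, hw⟩ := (hF.lienardRegular_clampExt hG hqs hsb).exists_isLienardSolOn q 0
  ⟨u, w, h, hu, hw⟩

lemma IsClampedOrbit.continuous_fst (h : IsClampedOrbit F G q s u w) : Continuous u :=
  continuousOn_univ.1 h.sol.continuousOn_fst

lemma IsClampedOrbit.continuous_snd (h : IsClampedOrbit F G q s u w) : Continuous w :=
  continuousOn_univ.1 h.sol.continuousOn_snd

lemma IsClampedOrbit.eventually_pos (hF : IsRestoringForce F q m b)
    (h : IsClampedOrbit F G q s u w) (hqs : q ≤ s) : ∀ᶠ z in nhdsWithin 0 (Ioi 0), 0 < w z := by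
  have hw := (h.sol 0 (mem_univ 0)).2
  rw [h.snd_zero, mul_zero, add_zero, h.fst_zero, clampExt_of_mem (left_mem_Icc.2 hqs)] at hw
  exact eventually_nhdsGT_pos_of_hasDerivAt hw h.snd_zero (hF.pos q ⟨le_rfl, hF.left_lt⟩)

lemma IsClampedOrbit.strictMonoOn (h : IsClampedOrbit F G q s u w)
    (hw : ∀ z ∈ Ioo 0 T, 0 < w z) : StrictMonoOn u (Icc 0 T) :=
  (h.sol.mono (subset_univ _)).strictMonoOn (convex_Icc 0 T) (by rwa [interior_Icc])

lemma IsClampedOrbit.mem_Icc (h : IsClampedOrbit F G q s u w) (hw : ∀ z ∈ Ioo 0 T, 0 < w z) :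
    ∀ z ∈ Icc 0 T, u z ∈ Icc q (u T) := by
  intro z hz
  have hT : 0 ≤ T := hz.1.trans hz.2
  have hmono := (h.strictMonoOn hw).monotoneOn
  exact ⟨h.fst_zero ▸ hmono (left_mem_Icc.2 hT) hz hz.1, hmono hz (right_mem_Icc.2 hT) hz.2⟩

lemma IsClampedOrbit.isLienardSolOn (h : IsClampedOrbit F G q s u w)
    (hw : ∀ z ∈ Ioo 0 T, 0 < w z) (hs : u T ≤ s) : IsLienardSolOn F G (Icc 0 T) u w := by
  have hmem : ∀ z ∈ Icc 0 T, u z ∈ Icc q s := fun z hz =>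
    Icc_subset_Icc_right hs (h.mem_Icc hw z hz)
  exact (h.sol.mono (subset_univ _)).congr (fun z hz => clampExt_of_mem (hmem z hz))
    fun z hz => clampExt_of_mem (hmem z hz)

lemma IsClampedOrbit.isAscent (h : IsClampedOrbit F G q s u w) (hT : 0 < T)
    (hw : ∀ z ∈ Ioc 0 T, 0 < w z) (hs : u T ≤ s) : IsAscent F G q u w T :=
  ⟨hT, h.isLienardSolOn (fun z hz => hw z (Ioo_subset_Ioc_self hz)) hs, h.fst_zero, h.snd_zero, hw⟩

lemma IsAscent.strictMonoOn (h : IsAscent F G q u w T) : StrictMonoOn u (Icc 0 T) :=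
  h.sol.strictMonoOn (convex_Icc 0 T) fun z hz =>
    h.snd_pos z (Ioo_subset_Ioc_self (interior_Icc.subset hz))

lemma IsAscent.mem_Icc (h : IsAscent F G q u w T) : ∀ z ∈ Icc 0 T, u z ∈ Icc q (u T) :=
  fun _ hz =>
    ⟨h.fst_zero ▸ h.strictMonoOn.monotoneOn (left_mem_Icc.2 h.time_pos.le) hz hz.1,
      h.strictMonoOn.monotoneOn hz (right_mem_Icc.2 h.time_pos.le) hz.2⟩

lemma IsAscent.lt_fst (h : IsAscent F G q u w T) : q < u T :=
  h.fst_zero ▸ h.strictMonoOn (left_mem_Icc.2 h.time_pos.le) (right_mem_Icc.2 h.time_pos.le)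
    h.time_pos

lemma IsAscent.restrict (h : IsAscent F G q u w T) (hT' : T' ∈ Ioc 0 T) : IsAscent F G q u w T' :=
  ⟨hT'.1, h.sol.mono (Icc_subset_Icc_right hT'.2), h.fst_zero, h.snd_zero,
    fun z hz => h.snd_pos z ⟨hz.1, hz.2.trans hT'.2⟩⟩

lemma IsAscent.exists_fst_eq (h : IsAscent F G q u w T) (hqs : q < s) (hs : s ≤ u T) :
    ∃ T' ∈ Ioc 0 T, u T' = s := by
  rw [← h.fst_zero] at hqs
  exact intermediate_value_Ioc h.time_pos.le h.sol.continuousOn_fst ⟨hqs, hs⟩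

lemma Reaches.mono (h : Reaches F G q s) (hqs' : q < s') (hs's : s' ≤ s) : Reaches F G q s' := by
  obtain ⟨u, w, T, hT, rfl⟩ := h
  obtain ⟨T', hT', hs'⟩ := hT.exists_fst_eq hqs' hs's
  exact ⟨u, w, T', hT.restrict hT', hs'⟩

lemma IsAscent.eq_clampedOrbit (hF : IsRestoringForce F q m b) (hG : ContinuousOn G (Ico q b))
    (h : IsAscent F G q u w T) (hs : u T ≤ s) (hsb : s < b) (h' : IsClampedOrbit F G q s u' w') :
    ∀ z ∈ Icc 0 T, u z = u' z ∧ w z = w' z := by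
  have hmem : ∀ z ∈ Icc 0 T, u z ∈ Icc q s := fun z hz => Icc_subset_Icc_right hs (h.mem_Icc z hz)
  refine IsLienardSolOn.eqOn_Icc
    (hF.lienardRegular_clampExt hG (h.lt_fst.le.trans hs) hsb)
    (h.sol.congr (fun z hz => (clampExt_of_mem (hmem z hz)).symm)
      fun z hz => (clampExt_of_mem (hmem z hz)).symm) (h'.sol.mono (subset_univ _))
    (h.fst_zero.trans h'.fst_zero.symm) (h.snd_zero.trans h'.snd_zero.symm)

lemma IsClampedOrbit.reaches_iff (hF : IsRestoringForce F q m b) (hG : ContinuousOn G (Ico q b))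
    (h : IsClampedOrbit F G q s u w) (hs's : s' ≤ s) (hsb : s < b) :
    Reaches F G q s' ↔ ∃ T, IsAscent F G q u w T ∧ u T = s' := by
  refine ⟨?_, fun ⟨T, hT⟩ => ⟨u, w, T, hT⟩⟩
  rintro ⟨u', w', T, hT, rfl⟩
  have heq := hT.eq_clampedOrbit hF hG hs's hsb h
  have huT := (heq T (right_mem_Icc.2 hT.time_pos.le)).1
  refine ⟨T, h.isAscent hT.time_pos (fun z hz => ?_) (huT ▸ hs's), huT.symm⟩
  exact (heq z (Ioc_subset_Icc_self hz)).2 ▸ hT.snd_pos z hz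

lemma IsAscent.eq_of_fst_eq (hF : IsRestoringForce F q m b) (hG : ContinuousOn G (Ico q b))
    (h : IsAscent F G q u w T) (h' : IsAscent F G q u' w' T') (heq : u T = u' T') (hb : u T < b) :
    T = T' ∧ w T = w' T' := by
  obtain ⟨u₁, w₁, h₁⟩ := hF.exists_isClampedOrbit hG h.lt_fst.le hb
  have e := h.eq_clampedOrbit hF hG le_rfl hb h₁
  have e' := h'.eq_clampedOrbit hF hG heq.ge hb h₁
  have hT := right_mem_Icc.2 h.time_pos.le
  have hT' := right_mem_Icc.2 h'.time_pos.le
  have hTT' : T = T' := by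
    rcases le_total T T' with hle | hle
    · refine h'.strictMonoOn.injOn ⟨h.time_pos.le, hle⟩ hT' ?_
      rw [(e' T ⟨h.time_pos.le, hle⟩).1, ← (e T hT).1, heq]
    · refine h.strictMonoOn.injOn hT ⟨h'.time_pos.le, hle⟩ ?_
      rw [(e T' ⟨h'.time_pos.le, hle⟩).1, ← (e' T' hT').1, heq]
  subst hTT'
  exact ⟨rfl, (e T hT).2.trans (e' T hT').2.symm⟩

lemma Reaches.exists_gt (hF : IsRestoringForce F q m b) (hG : ContinuousOn G (Ico q b))
    (h : Reaches F G q s) (hsb : s < b) : ∃ s' ∈ Ioo s b, Reaches F G q s' := by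
  obtain ⟨s₁, hs₁, hs₁b⟩ := exists_between hsb
  have hqs : q < s := let ⟨_, _, _, hT, e⟩ := h; e ▸ hT.lt_fst
  obtain ⟨u, w, horb⟩ := hF.exists_isClampedOrbit hG (hqs.trans hs₁).le hs₁b
  obtain ⟨T, hT, rfl⟩ := (horb.reaches_iff hF hG hs₁.le hs₁b).1 h
  have hnhds : ∀ᶠ z in nhds T, 0 < w z ∧ u z < s₁ :=
    (horb.continuous_snd.continuousAt.eventually
      (lt_mem_nhds (hT.snd_pos T ⟨hT.time_pos, le_rfl⟩))).and
      (horb.continuous_fst.continuousAt.eventually (gt_mem_nhds hs₁))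
  obtain ⟨c, hTc, hc⟩ := exists_Ico_subset_of_mem_nhds hnhds ⟨T + 1, lt_add_one T⟩
  obtain ⟨T', hTT', hT'c⟩ := exists_between hTc
  have hT' : IsAscent F G q u w T' := by
    refine horb.isAscent (hT.time_pos.trans hTT') (fun z hz => ?_) (hc ⟨hTT'.le, hT'c⟩).2.le
    rcases le_or_gt z T with hzT | hTz
    · exact hT.snd_pos z ⟨hz.1, hzT⟩
    · exact (hc ⟨hTz.le, hz.2.trans_lt hT'c⟩).1
  exact ⟨u T', ⟨hT'.strictMonoOn ⟨hT.time_pos.le, hTT'.le⟩ (right_mem_Icc.2 hT'.time_pos.le) hTT',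
    (hc ⟨hTT'.le, hT'c⟩).2.trans hs₁b⟩, u, w, T', hT', rfl⟩

end Ascent

section Limit

variable {f g u w : ℝ → ℝ} {l : ℝ}

lemma IsLienardSolOn.not_tendsto_snd_atTop (h : IsLienardSolOn f g univ u w)
    (hl : Tendsto u atTop (nhds l)) : ¬Tendsto w atTop atTop := fun hw =>
  not_tendsto_nhds_of_tendsto_atTop (tendsto_atTop_of_hasDerivAt_ge one_pos <| by
    filter_upwards [hw.eventually_ge_atTop 1] with z hz using ⟨(h z (mem_univ z)).1, hz⟩) l hl

lemma IsLienardSolOn.hasDerivAt_snd_sub_primitive (h : IsLienardSolOn f g univ u w)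
    (hg : Continuous g) (z : ℝ) :
    HasDerivAt (fun z => w z - primitive g 0 (u z)) (f (u z)) z := by
  obtain ⟨hu, hw⟩ := h z (mem_univ z)
  exact (hw.fun_sub ((hasDerivAt_primitive hg 0 (u z)).comp z hu)).congr_deriv (by ring)

lemma tendsto_primitive_comp (hg : Continuous g) (hl : Tendsto u atTop (nhds l)) :
    Tendsto (fun z => primitive g 0 (u z)) atTop (nhds (primitive g 0 l)) :=
  (hasDerivAt_primitive hg 0 l).continuousAt.tendsto.comp hl

lemma IsLienardSolOn.not_tendsto_snd_sub_primitive_atTop (h : IsLienardSolOn f g univ u w)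
    (hg : Continuous g) (hl : Tendsto u atTop (nhds l)) :
    ¬Tendsto (fun z => w z - primitive g 0 (u z)) atTop atTop := fun hy =>
  h.not_tendsto_snd_atTop hl <| by simpa using hy.atTop_add (tendsto_primitive_comp hg hl)

lemma IsLienardSolOn.map_limit_nonpos (h : IsLienardSolOn f g univ u w) (hf : Continuous f)
    (hg : Continuous g) (hl : Tendsto u atTop (nhds l)) : f l ≤ 0 := by
  by_contra! hpos
  refine h.not_tendsto_snd_sub_primitive_atTop hg hl
    (tendsto_atTop_of_hasDerivAt_ge (v' := fun z => f (u z)) (half_pos hpos) ?_)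
  filter_upwards [((hf.tendsto l).comp hl).eventually_const_lt (half_lt_self hpos)] with z hz
  exact ⟨h.hasDerivAt_snd_sub_primitive hg z, hz.le⟩

lemma IsLienardSolOn.map_limit_eq_zero (h : IsLienardSolOn f g univ u w) (hf : Continuous f)
    (hg : Continuous g) (hl : Tendsto u atTop (nhds l)) : f l = 0 := by
  refine le_antisymm (h.map_limit_nonpos hf hg hl) ?_
  simpa using h.reflect.map_limit_nonpos (by fun_prop) (by fun_prop) hl.neg

lemma IsLienardSolOn.tendsto_snd_zero (h : IsLienardSolOn f g univ u w) (hg : Continuous g)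
    (hl : Tendsto u atTop (nhds l)) {a : ℝ} (hf : ∀ z > a, 0 ≤ f (u z)) :
    Tendsto w atTop (nhds 0) := by
  have hmono : MonotoneOn (fun z => w z - primitive g 0 (u z)) (Ici a) :=
    monotoneOn_of_hasDerivAt_nonneg (convex_Ici a)
      (fun z _ => h.hasDerivAt_snd_sub_primitive hg z) fun z hz => hf z (interior_Ici.subset hz)
  obtain ⟨y, hy⟩ := (tendsto_atTop_of_monotoneOn_Ici hmono).resolve_left
    (h.not_tendsto_snd_sub_primitive_atTop hg hl)
  have hw : Tendsto w atTop (nhds (y + primitive g 0 l)) := by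
    simpa using hy.add (tendsto_primitive_comp hg hl)
  rwa [eq_zero_of_tendsto_of_tendsto_hasDerivAt (fun z => (h z (mem_univ z)).1) hl hw] at hw

end Limit

section Dichotomy

/-- `T` is the first positive time at which an orbit starting on the axis `w = 0` returns to it,
having stayed in the upper half plane in between. -/
structure IsTurningTime (w : ℝ → ℝ) (T : ℝ) : Prop where
  time_pos : 0 < T
  eq_zero : w T = 0
  pos : ∀ z ∈ Ioo 0 T, 0 < w z

/-- The orbit stays in the upper half plane and converges to the equilibrium `(m, 0)` from the
left. -/
structure IsAsymptotic (m : ℝ) (u w : ℝ → ℝ) : Prop where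
  snd_pos : ∀ z > 0, 0 < w z
  fst_lt : ∀ z > 0, u z < m
  tendsto_fst : Tendsto u atTop (nhds m)
  tendsto_snd : Tendsto w atTop (nhds 0)

variable {F G u w : ℝ → ℝ} {q m b s s' T : ℝ}

lemma IsClampedOrbit.reaches_of_lt (h : IsClampedOrbit F G q s u w) (hT : 0 < T)
    (hw : ∀ z ∈ Ioo 0 T, 0 < w z) (hqs' : q < s') (hs's : s' ≤ s) (hs'T : s' < u T) :
    Reaches F G q s' := by
  rw [← h.fst_zero] at hqs'
  obtain ⟨T', hT', rfl⟩ :=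
    intermediate_value_Ioo hT.le h.continuous_fst.continuousOn ⟨hqs', hs'T⟩
  exact ⟨u, w, T', h.isAscent hT'.1 (fun z hz => hw z ⟨hz.1, hz.2.trans_lt hT'.2⟩) hs's, rfl⟩

lemma IsClampedOrbit.lt_fst_of_isTurningTime (hF : IsRestoringForce F q m b)
    (hG : ContinuousOn G (Ico q b)) (h : IsClampedOrbit F G q s u w) (hms : m ≤ s) (hsb : s < b)
    (hT : IsTurningTime w T) : m < u T := by
  by_contra! huT
  have hqs := hF.left_lt.le.trans hms
  have hquT : u T ∈ Icc q m := ⟨(h.mem_Icc hT.pos T ⟨hT.time_pos.le, le_rfl⟩).1, huT⟩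
  rcases huT.eq_or_lt with heq | hlt
  · have hconst : IsLienardSolOn (clampExt F q s) (clampExt G q s) univ (fun _ => m) fun _ => 0 :=
      fun z _ => ⟨hasDerivAt_const _ _, (hasDerivAt_const z (0 : ℝ)).congr_deriv <| by
        rw [clampExt_of_mem ⟨hF.left_lt.le, hms⟩, hF.zero, mul_zero, add_zero]⟩
    have := (h.sol.eq_of_eq (hF.lienardRegular_clampExt hG hqs hsb) hconst heq hT.eq_zero 0).1
    exact hF.left_lt.ne (h.fst_zero.symm.trans this)
  · have hw := (h.sol T (mem_univ T)).2
    rw [hT.eq_zero, mul_zero, add_zero, clampExt_of_mem ⟨hquT.1, hquT.2.trans hms⟩] at hw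
    obtain ⟨z, hneg, hz⟩ := ((eventually_nhdsLT_neg_of_hasDerivAt hw hT.eq_zero
      (hF.pos _ ⟨hquT.1, hlt⟩)).and (Ioo_mem_nhdsLT hT.time_pos)).exists
    exact hneg.not_gt (hT.pos z hz)

lemma IsClampedOrbit.exists_limit (h : IsClampedOrbit F G q s u w) (hqs : q < s)
    (hw : ∀ z > 0, 0 < w z) (hR : ¬Reaches F G q s) :
    ∃ l ∈ Ioc q s, Tendsto u atTop (nhds l) ∧ ∀ z > 0, u z ∈ Ioo q l := by
  have hmono : StrictMonoOn u (Ici 0) := (h.sol.mono (subset_univ _)).strictMonoOn (convex_Ici 0)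
    fun z hz => hw z (interior_Ici.subset hz)
  have hle : ∀ z > 0, u z ≤ s := fun z hz => not_lt.1 fun hlt =>
    hR (h.reaches_of_lt hz (fun t ht => hw t ht.1) hqs le_rfl hlt)
  obtain ⟨l, hl⟩ := (tendsto_atTop_of_monotoneOn_Ici hmono.monotoneOn).resolve_left fun htop => by
    obtain ⟨z, hsz, hz⟩ := ((htop.eventually_gt_atTop s).and (eventually_gt_atTop 0)).exists
    exact hsz.not_ge (hle z hz)
  have hmem : ∀ z > 0, u z ∈ Ioo q l := fun z hz => by
    refine ⟨h.fst_zero ▸ hmono self_mem_Ici (mem_Ici.2 hz.le) hz, ?_⟩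
    have hz1 : u z < u (z + 1) :=
      hmono (mem_Ici.2 hz.le) (mem_Ici.2 (by linarith)) (lt_add_one z)
    refine hz1.trans_le (ge_of_tendsto hl ?_)
    filter_upwards [eventually_ge_atTop (z + 1)] with t ht
    exact hmono.monotoneOn (mem_Ici.2 (by linarith)) (mem_Ici.2 (by linarith)) ht
  refine ⟨l, ⟨(hmem 1 one_pos).1.trans (hmem 1 one_pos).2, le_of_tendsto hl ?_⟩, hl, hmem⟩
  filter_upwards [eventually_gt_atTop 0] with z hz using hle z hz

lemma IsRestoringForce.eq_of_eq_zero (hF : IsRestoringForce F q m b) {x : ℝ} (hx : x ∈ Ico q b)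
    (h0 : F x = 0) : x = m := by
  rcases lt_trichotomy x m with hlt | heq | hgt
  · exact absurd h0 (hF.pos x ⟨hx.1, hlt⟩).ne'
  · exact heq
  · exact absurd h0 (hF.neg x ⟨hgt, hx.2⟩).ne

theorem IsClampedOrbit.isTurningTime_or_isAsymptotic (hF : IsRestoringForce F q m b)
    (hG : ContinuousOn G (Ico q b)) (h : IsClampedOrbit F G q s u w) (hms : m ≤ s) (hsb : s < b)
    (hR : ¬Reaches F G q s) : (∃ T, IsTurningTime w T ∧ u T ≤ s) ∨ IsAsymptotic m u w := by
  have hqs : q < s := hF.left_lt.trans_le hms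
  have hreg := hF.lienardRegular_clampExt hG hqs.le hsb
  by_cases hw : ∀ z > 0, 0 < w z
  · right
    obtain ⟨l, hls, hl, hmem⟩ := h.exists_limit hqs hw hR
    have hFl : clampExt F q s l = 0 :=
      h.sol.map_limit_eq_zero hreg.lipschitz.choose_spec.continuous hreg.continuous hl
    rw [clampExt_of_mem (Ioc_subset_Icc_self hls)] at hFl
    obtain rfl := hF.eq_of_eq_zero ⟨hls.1.le, hls.2.trans_lt hsb⟩ hFl
    refine ⟨hw, fun z hz => (hmem z hz).2, hl,
      h.sol.tendsto_snd_zero hreg.continuous hl (a := 0) fun z hz => ?_⟩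
    have hz' := hmem z hz
    rw [clampExt_of_mem ⟨hz'.1.le, hz'.2.le.trans hls.2⟩]
    exact (hF.pos _ ⟨hz'.1.le, hz'.2⟩).le
  · left
    push Not at hw
    obtain ⟨z, hz, hwz⟩ := hw
    obtain ⟨T, hT, hwT, hpos⟩ := exists_eq_zero_forall_pos h.continuous_snd
      (h.eventually_pos hF hqs.le) hz hwz
    exact ⟨T, ⟨hT.1, hwT, hpos⟩,
      not_lt.1 fun hlt => hR (h.reaches_of_lt hT.1 hpos hqs le_rfl hlt)⟩

lemma IsRestoringForce.exists_mul_sub_le (hF : IsRestoringForce F q m b) :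
    ∃ k > 0, ∀ᶠ x in nhdsWithin m (Iio m), k * (m - x) ≤ F x := by
  obtain ⟨d, hd, hFd⟩ := hF.hasDerivAt
  refine ⟨-d / 2, by linarith, ?_⟩
  have hslope := (hasDerivAt_iff_tendsto_slope_left_right.1 hFd).1.eventually_lt_const
    (show d < d / 2 by linarith)
  filter_upwards [hslope, self_mem_nhdsWithin] with x hx hxm
  rw [slope_def_field, hF.zero, sub_zero, div_lt_iff_of_neg (sub_neg.2 hxm)] at hx
  linarith

/-- If `G m ≥ 0`, the slope `ρ = (m - u) / w` of an asymptotic orbit, which is positive, would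
satisfy the Riccati inequality `ρ' ≤ -1 + ηρ - kρ² ≤ -1/2`. -/
lemma IsClampedOrbit.neg_of_isAsymptotic (hF : IsRestoringForce F q m b)
    (hG : ContinuousOn G (Ico q b)) (h : IsClampedOrbit F G q s u w) (hms : m ≤ s) (hsb : s < b)
    (hO : IsAsymptotic m u w) : G m < 0 := by
  by_contra! hGm
  obtain ⟨k, hk, hFk⟩ := hF.exists_mul_sub_le
  set η := min k 1
  have hη : 0 < η := lt_min hk one_pos
  have hηk : η * η ≤ k := by nlinarith [min_le_left k 1, min_le_right k 1]
  have hGu : Tendsto (fun z => clampExt G q s (u z)) atTop (nhds (G m)) := by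
    have := ((hF.lienardRegular_clampExt hG (hF.left_lt.le.trans hms) hsb).continuous.tendsto
      m).comp hO.tendsto_fst
    rwa [clampExt_of_mem ⟨hF.left_lt.le, hms⟩] at this
  have hum : Tendsto u atTop (nhdsWithin m (Iio m)) := tendsto_nhdsWithin_iff.2
    ⟨hO.tendsto_fst, (eventually_gt_atTop 0).mono hO.fst_lt⟩
  have hρ : Tendsto (fun z => -((m - u z) / w z)) atTop atTop := by
    refine tendsto_atTop_of_hasDerivAt_ge (m := 1 / 2) (v' := fun z => 1 + (m - u z) *
      (clampExt F q s (u z) + clampExt G q s (u z) * w z) / w z ^ 2) (by norm_num) ?_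
    filter_upwards [hGu.eventually_const_lt (show -η < G m by linarith), hum.eventually hFk,
      hO.tendsto_fst.eventually_const_lt hF.left_lt, eventually_gt_atTop 0] with z hGz hFz hqz hz
    have hw := hO.snd_pos z hz
    have hu := sub_pos.2 (hO.fst_lt z hz)
    have hsol := h.sol z (mem_univ z)
    refine ⟨((hsol.1.const_sub m).fun_div hsol.2 hw.ne').fun_neg.congr_deriv
      (by field_simp; ring), ?_⟩
    suffices -(1 / 2) ≤ (m - u z) * (clampExt F q s (u z) + clampExt G q s (u z) * w z) /
      w z ^ 2 by linarith
    rw [clampExt_of_mem (H := F) ⟨hqz.le, (hO.fst_lt z hz).le.trans hms⟩,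
      le_div_iff₀ (by positivity)]
    nlinarith [mul_le_mul_of_nonneg_left hFz hu.le,
      mul_le_mul_of_nonneg_left hGz.le (mul_pos hu hw).le, sq_nonneg (η * (m - u z) - w z),
      mul_le_mul_of_nonneg_right hηk (mul_pos hu hu).le]
  obtain ⟨z, hz, hz0⟩ := ((hρ.eventually_ge_atTop 0).and (eventually_gt_atTop 0)).exists
  linarith [div_pos (sub_pos.2 (hO.fst_lt z hz0)) (hO.snd_pos z hz0)]

lemma IsRestoringForce.reaches_center (hF : IsRestoringForce F q m b)
    (hG : ContinuousOn G (Ico q b)) (hGm : 0 ≤ G m) : Reaches F G q m := by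
  by_contra hR
  obtain ⟨u, w, h⟩ := hF.exists_isClampedOrbit hG hF.left_lt.le hF.lt_right
  rcases h.isTurningTime_or_isAsymptotic hF hG le_rfl hF.lt_right hR with ⟨T, hT, huT⟩ | hO
  · exact huT.not_gt (h.lt_fst_of_isTurningTime hF hG le_rfl hF.lt_right hT)
  · exact hGm.not_gt (h.neg_of_isAsymptotic hF hG le_rfl hF.lt_right hO)

end Dichotomy

section Stability

variable {F G u w : ℝ → ℝ} {q m b s s' T T₀ : ℝ}

lemma abs_clampExt_sub_le {H H' : ℝ → ℝ} {ε : ℝ} (hqs : q ≤ s)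
    (hclose : ∀ x ∈ Icc q s, |H' x - H x| ≤ ε) (x : ℝ) :
    |clampExt H' q s x - clampExt H q s x| ≤ ε :=
  hclose _ (clamp_mem_Icc hqs x)

lemma IsClampedOrbit.exists_forall_abs_sub_lt (hF : IsRestoringForce F q m b)
    (hG : ContinuousOn G (Ico q b)) (h : IsClampedOrbit F G q s u w) (hqs : q ≤ s) (hsb : s < b)
    (T : ℝ) {η : ℝ} (hη : 0 < η) :
    ∃ ε > 0, ∀ G', ContinuousOn G' (Ico q b) → (∀ x ∈ Icc q s, |G' x - G x| ≤ ε) →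
      ∀ u' w', IsClampedOrbit F G' q s u' w' →
        ∀ z ∈ Icc 0 T, |u' z - u z| < η ∧ |w' z - w z| < η := by
  obtain ⟨ε, hε, hdep⟩ := IsLienardSolOn.exists_forall_abs_sub_lt
    (hF.lienardRegular_clampExt hG hqs hsb) h.sol T hη
  exact ⟨ε, hε, fun G' hG' hclose u' w' h' =>
    hdep _ (hF.lienardRegular_clampExt hG' hqs hsb).continuous (abs_clampExt_sub_le hqs hclose)
      u' w' h'.sol (h'.fst_zero.trans h.fst_zero.symm) (h'.snd_zero.trans h.snd_zero.symm)⟩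

/-- A perturbed orbit can only turn beyond `m`, where the unperturbed one stays away from the axis
`w = 0`; near the start, where both are close to the axis, they are left of `m`. -/
theorem Reaches.exists_forall_reaches (hF : IsRestoringForce F q m b)
    (hG : ContinuousOn G (Ico q b)) (hms : m ≤ s) (hsb : s < b) (hR : Reaches F G q s) :
    ∃ s' < b, ∃ ε > 0, ∀ G', ContinuousOn G' (Ico q b) →
      (∀ x ∈ Icc q s', |G' x - G x| ≤ ε) → Reaches F G' q s := by
  obtain ⟨s', ⟨hss', hs'b⟩, hR'⟩ := hR.exists_gt hF hG hsb
  have hqs : q < s := hF.left_lt.trans_le hms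
  have hqs' := (hqs.trans hss').le
  obtain ⟨u, w, h⟩ := hF.exists_isClampedOrbit hG hqs' hs'b
  obtain ⟨T, hT, huT⟩ := (h.reaches_iff hF hG le_rfl hs'b).1 hR'
  obtain ⟨η, hη, hle⟩ := isCompact_Icc.exists_forall_le' (s := Icc 0 T) (a := 0)
    (f := fun z => max (w z) (m - u z))
    (h.continuous_snd.max (continuous_const.sub h.continuous_fst)).continuousOn fun z hz => by
      rcases hz.1.eq_or_lt with rfl | hz0
      · exact lt_max_of_lt_right (by linarith [h.fst_zero, hF.left_lt])
      · exact lt_max_of_lt_left (hT.snd_pos z ⟨hz0, hz.2⟩)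
  obtain ⟨ε, hε, hdep⟩ := h.exists_forall_abs_sub_lt hF hG hqs' hs'b T
    (lt_min hη (sub_pos.2 hss'))
  refine ⟨s', hs'b, ε, hε, fun G' hG' hclose => ?_⟩
  obtain ⟨u', w', h'⟩ := hF.exists_isClampedOrbit hG' hqs' hs'b
  have hd := hdep G' hG' hclose u' w' h'
  have hpos : ∀ z ∈ Ioo 0 T, 0 < w' z := by
    by_contra! ⟨z, hz, hwz⟩
    obtain ⟨T', hT', hwT', hpos'⟩ := exists_eq_zero_forall_pos h'.continuous_snd
      (h'.eventually_pos hF hqs') hz.1 hwz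
    have hmu := h'.lt_fst_of_isTurningTime hF hG' (hms.trans hss'.le) hs'b ⟨hT'.1, hwT', hpos'⟩
    have hT'T : T' ∈ Icc 0 T := ⟨hT'.1.le, hT'.2.trans hz.2.le⟩
    obtain ⟨hu, hw⟩ := hd T' hT'T
    have := min_le_left η (s' - s)
    rcases le_max_iff.1 (hle T' hT'T) with hle | hle <;> linarith [abs_lt.1 hu, abs_lt.1 hw]
  refine h'.reaches_of_lt hT.time_pos hpos hqs hss'.le ?_
  linarith [abs_lt.1 (hd T ⟨hT.time_pos.le, le_rfl⟩).1, min_le_right η (s' - s)]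

lemma IsClampedOrbit.exists_neg_of_isTurningTime (hF : IsRestoringForce F q m b)
    (hG : ContinuousOn G (Ico q b)) (h : IsClampedOrbit F G q s u w) (hms : m ≤ s) (hsb : s < b)
    (hT : IsTurningTime w T) (huT : u T < s) :
    ∃ T₁ > 0, w T₁ < 0 ∧ ∀ z ∈ Icc 0 T₁, u z < s := by
  have hmu := h.lt_fst_of_isTurningTime hF hG hms hsb hT
  have hw := (h.sol T (mem_univ T)).2.neg
  rw [hT.eq_zero, mul_zero, add_zero, clampExt_of_mem ⟨(hF.left_lt.trans hmu).le, huT.le⟩] at hw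
  have hneg : ∀ᶠ z in nhdsWithin T (Ioi T), 0 < -w z :=
    eventually_nhdsGT_pos_of_hasDerivAt hw (by simp [hT.eq_zero])
      (neg_pos.2 (hF.neg _ ⟨hmu, huT.trans hsb⟩))
  obtain ⟨c, hTc, hc⟩ := exists_Ico_subset_of_mem_nhds
    (h.continuous_fst.continuousAt.eventually (gt_mem_nhds huT)) ⟨T + 1, lt_add_one T⟩
  obtain ⟨T₁, hwT₁, hT₁⟩ := (hneg.and (Ioo_mem_nhdsGT hTc)).exists
  refine ⟨T₁, hT.time_pos.trans hT₁.1, neg_pos.1 hwT₁, fun z hz => ?_⟩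
  rcases le_total z T with hzT | hTz
  · exact (h.mem_Icc hT.pos z ⟨hz.1, hzT⟩).2.trans_lt huT
  · exact hc ⟨hTz, hz.2.trans_lt hT₁.2⟩

lemma IsClampedOrbit.exists_forall_not_reaches_of_neg (hF : IsRestoringForce F q m b)
    (hG : ContinuousOn G (Ico q b)) (h : IsClampedOrbit F G q s u w) (hqs : q ≤ s) (hsb : s < b)
    (hT : 0 < T) (hwT : w T < 0) (hu : ∀ z ∈ Icc 0 T, u z < s) :
    ∃ ε > 0, ∀ G', ContinuousOn G' (Ico q b) →
      (∀ x ∈ Icc q s, |G' x - G x| ≤ ε) → ¬Reaches F G' q s := by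
  obtain ⟨η, hη, hle⟩ := isCompact_Icc.exists_forall_le' (f := fun z => s - u z)
    (continuous_const.sub h.continuous_fst).continuousOn fun z hz => sub_pos.2 (hu z hz)
  obtain ⟨ε, hε, hdep⟩ := h.exists_forall_abs_sub_lt hF hG hqs hsb T (lt_min hη (neg_pos.2 hwT))
  refine ⟨ε, hε, fun G' hG' hclose hR => ?_⟩
  obtain ⟨u', w', h'⟩ := hF.exists_isClampedOrbit hG' hqs hsb
  obtain ⟨T', hT', huT'⟩ := (h'.reaches_iff hF hG' le_rfl hsb).1 hR
  have hd := hdep G' hG' hclose u' w' h'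
  rcases le_or_gt T' T with hT'T | hTT'
  · have hT'mem : T' ∈ Icc 0 T := ⟨hT'.time_pos.le, hT'T⟩
    linarith [abs_lt.1 (hd T' hT'mem).1, hle T' hT'mem, min_le_left η (-w T)]
  · linarith [abs_lt.1 (hd T ⟨hT.le, le_rfl⟩).2, hT'.snd_pos T ⟨hT, hTT'.le⟩,
      min_le_right η (-w T)]

lemma IsRestoringForce.primitive_neg (hF : IsRestoringForce F q m b) (hms : m < s) (hss' : s ≤ s')
    (hs'b : s' < b) : primitive (clampExt F q s') m s < 0 := by
  have hqs' : q ≤ s' := hF.left_lt.le.trans (hms.le.trans hss')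
  obtain ⟨L, hL⟩ := hF.lipschitzOnWith s' hs'b
  have hP := hasDerivAt_primitive (lipschitzWith_clampExt hL hqs').continuous m
  have hmono := strictMonoOn_of_hasDerivAt_pos (convex_Icc m s) (fun x _ => (hP x).fun_neg)
    fun x hx => by
      rw [interior_Icc] at hx
      rw [clampExt_of_mem ⟨(hF.left_lt.trans hx.1).le, hx.2.le.trans hss'⟩]
      exact neg_pos.2 (hF.neg x ⟨hx.1, hx.2.trans_le (hss'.trans hs'b.le)⟩)
  simpa using hmono (left_mem_Icc.2 hms.le) (right_mem_Icc.2 hms.le) hms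

lemma IsAscent.neg_primitive_lt_of_nonpos (hF : IsRestoringForce F q m b) (h : IsAscent F G q u w T)
    (huT : u T ≤ s) (hsb : s < b) (hT₀ : T₀ ∈ Icc 0 T) (hG : ∀ x ∈ Icc (u T₀) (u T), G x ≤ 0) :
    -primitive (clampExt F q s) m (u T) <
      w T₀ ^ 2 / 2 - primitive (clampExt F q s) m (u T₀) := by
  obtain ⟨L, hL⟩ := hF.lipschitzOnWith s hsb
  have hsub : Icc T₀ T ⊆ Icc 0 T := Icc_subset_Icc_left hT₀.1
  have hsol : IsLienardSolOn (clampExt F q s) G (Icc T₀ T) u w :=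
    (h.sol.mono hsub).congr (fun z hz => (clampExt_of_mem
      (Icc_subset_Icc_right huT (h.mem_Icc z (hsub hz)))).symm) fun _ _ => rfl
  have hanti := hsol.antitoneOn_energy
    (lipschitzWith_clampExt hL (h.lt_fst.le.trans huT)).continuous (convex_Icc T₀ T)
    (fun z hz => hG _ ?_) m (left_mem_Icc.2 hT₀.2) (right_mem_Icc.2 hT₀.2) hT₀.2
  · linarith [pow_pos (h.snd_pos T ⟨h.time_pos, le_rfl⟩) 2]
  · have hz := interior_subset hz
    exact ⟨h.strictMonoOn.monotoneOn hT₀ (hsub hz) hz.1,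
      h.strictMonoOn.monotoneOn (hsub hz) (hsub (right_mem_Icc.2 hT₀.2)) hz.2⟩

lemma IsRestoringForce.eventually_energy_lt {σ : ℝ} (hF : IsRestoringForce F q m b) (hqs : q ≤ s)
    (hmσ : m < σ) (hσs : σ ≤ s) (hsb : s < b) :
    ∀ᶠ p : ℝ × ℝ in nhds (m, 0),
      p.2 ^ 2 / 2 - primitive (clampExt F q s) m p.1 < -primitive (clampExt F q s) m σ := by
  obtain ⟨L, hL⟩ := hF.lipschitzOnWith s hsb
  set P := primitive (clampExt F q s) m
  have hP : Continuous P := continuous_iff_continuousAt.2 fun x =>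
    (hasDerivAt_primitive (lipschitzWith_clampExt hL hqs).continuous m x).continuousAt
  have hE : Continuous fun p : ℝ × ℝ => p.2 ^ 2 / 2 - P p.1 := by fun_prop
  refine hE.continuousAt.eventually (gt_mem_nhds ?_)
  simpa [P] using hF.primitive_neg hmσ hσs hsb

/-- Near `m` the damping `G` is negative, so perturbed orbits lose energy there, and an orbit
entering this region close to `(m, 0)` lacks the energy to cross it. -/
lemma IsClampedOrbit.exists_forall_not_reaches_of_isAsymptotic (hF : IsRestoringForce F q m b)
    (hG : ContinuousOn G (Ico q b)) (h : IsClampedOrbit F G q s u w) (hms : m < s) (hsb : s < b)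
    (hO : IsAsymptotic m u w) :
    ∃ ε > 0, ∀ G', ContinuousOn G' (Ico q b) →
      (∀ x ∈ Icc q s, |G' x - G x| ≤ ε) → ¬Reaches F G' q s := by
  have hqs : q ≤ s := hF.left_lt.le.trans hms.le
  have hGm := h.neg_of_isAsymptotic hF hG hms.le hsb hO
  obtain ⟨α, β, ⟨hαm, hmβ⟩, hαβ⟩ := mem_nhds_iff_exists_Ioo_subset.1
    ((hG.continuousAt (Ico_mem_nhds hF.left_lt hF.lt_right)).eventually
      (gt_mem_nhds (show G m < G m / 2 by linarith)))
  obtain ⟨σ, hmσ, hσ⟩ := exists_between (lt_min hmβ hms)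
  obtain ⟨hσβ, hσs⟩ := lt_min_iff.1 hσ
  set P := primitive (clampExt F q s) m
  have hnhds : ∀ᶠ p : ℝ × ℝ in nhds (m, 0), p.2 ^ 2 / 2 - P p.1 < -P σ ∧ α < p.1 :=
    (hF.eventually_energy_lt hqs hmσ hσs.le hsb).and
      (continuousAt_fst.eventually (lt_mem_nhds hαm))
  obtain ⟨T, hT, hT0⟩ := (((hO.tendsto_fst.prodMk_nhds hO.tendsto_snd).eventually
    (eventually_eventually_nhds.2 hnhds)).and (eventually_gt_atTop 0)).exists
  obtain ⟨η, hη, hball⟩ := Metric.eventually_nhds_iff.1 hT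
  obtain ⟨ε, hε, hdep⟩ := h.exists_forall_abs_sub_lt hF hG hqs hsb T (lt_min hη (sub_pos.2 hmσ))
  refine ⟨min ε (-G m / 2), lt_min hε (by linarith), fun G' hG' hclose hR => ?_⟩
  obtain ⟨u', w', h'⟩ := hF.exists_isClampedOrbit hG' hqs hsb
  obtain ⟨T', hT', rfl⟩ := (h'.reaches_iff hF hG' hσs.le hsb).1
    (hR.mono (hF.left_lt.trans hmσ) hσs.le)
  have hd := hdep G' hG' (fun x hx => (hclose x hx).trans (min_le_left _ _)) u' w' h'
  have hTT' : T < T' := by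
    by_contra! hle
    linarith [abs_lt.1 (hd T' ⟨hT'.time_pos.le, hle⟩).1, hO.fst_lt T' hT'.time_pos,
      min_le_right η (u' T' - m)]
  obtain ⟨hdu, hdw⟩ := hd T ⟨hT0.le, le_rfl⟩
  obtain ⟨hE, hα⟩ := hball (y := (u' T, w' T))
    (max_lt (hdu.trans_le (min_le_left _ _)) (hdw.trans_le (min_le_left _ _)))
  refine (hT'.neg_primitive_lt_of_nonpos hF hσs.le hsb ⟨hT0.le, hTT'.le⟩ fun x hx => ?_).not_gt hE
  have hGx : G x < G m / 2 := hαβ ⟨hα.trans_le hx.1, hx.2.trans_lt hσβ⟩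
  have hqx : q ≤ x := (hT'.mem_Icc T ⟨hT0.le, hTT'.le⟩).1.trans hx.1
  linarith [(abs_le.1 (hclose x ⟨hqx, hx.2.trans hσs.le⟩)).2, min_le_right ε (-G m / 2)]

theorem exists_forall_not_reaches (hF : IsRestoringForce F q m b)
    (hG : ContinuousOn G (Ico q b)) (hms : m ≤ s) (hss' : s < s') (hs'b : s' < b)
    (hR : ¬Reaches F G q s) :
    ∃ ε > 0, ∀ G', ContinuousOn G' (Ico q b) →
      (∀ x ∈ Icc q s', |G' x - G x| ≤ ε) → ¬Reaches F G' q s' := by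
  have hms' := hms.trans_lt hss'
  have hqs : q < s := hF.left_lt.trans_le hms
  obtain ⟨u, w, h⟩ := hF.exists_isClampedOrbit hG (hqs.trans hss').le hs'b
  rcases h.isTurningTime_or_isAsymptotic hF hG hms'.le hs'b (fun hR' => hR (hR'.mono hqs hss'.le))
    with ⟨T, hT, -⟩ | hO
  · have huT : u T < s' := (not_lt.1 fun hlt =>
      hR (h.reaches_of_lt hT.time_pos hT.pos hqs hss'.le hlt)).trans_lt hss'
    obtain ⟨T₁, hT₁, hwT₁, hu⟩ := h.exists_neg_of_isTurningTime hF hG hms'.le hs'b hT huT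
    exact h.exists_forall_not_reaches_of_neg hF hG (hqs.trans hss').le hs'b hT₁ hwT₁ hu
  · exact h.exists_forall_not_reaches_of_isAsymptotic hF hG hms' hs'b hO

end Stability

section ClosedOrbit

/-- The system `u' = w`, `w' = F u + G u * w` has a nonconstant periodic orbit through `(q, 0)`
along which `u` stays in `I`. -/
def HasClosedOrbit (F G : ℝ → ℝ) (q : ℝ) (I : Set ℝ) : Prop :=
  ∃ u w, IsLienardSolOn F G univ u w ∧ (∀ z, u z ∈ I) ∧ u 0 = q ∧ w 0 = 0 ∧
    IsPeriodicSol u w ∧ Nonconst u w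

variable {f g F G u w u' w' : ℝ → ℝ} {q m b s T T' x : ℝ}

lemma IsLienardSolOn.eq_reverse (hfg : LienardRegular f g) (h : IsLienardSolOn f g univ u w)
    (h' : IsLienardSolOn f (-g) univ u' w') (hu : u 0 = u' 0) (hw : w 0 = 0) (hw' : w' 0 = 0)
    (z : ℝ) : u z = u' (-z) ∧ w z = -w' (-z) := by
  have hrev := h'.reverse (mapsTo_univ _ univ)
  rw [neg_neg] at hrev
  exact h.eq_of_eq hfg hrev (z₀ := 0) (by simpa using hu) (by simp [hw, hw']) z

lemma IsLienardSolOn.add_period (hfg : LienardRegular f g) (h : IsLienardSolOn f g univ u w)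
    (h' : IsLienardSolOn f (-g) univ u' w') (hu : u 0 = u' 0) (hw : w 0 = 0) (hw' : w' 0 = 0)
    (huT : u T = u' T') (hwT : w T = 0) (hwT' : w' T' = 0) (z : ℝ) :
    u (z + (T + T')) = u z ∧ w (z + (T + T')) = w z := by
  obtain ⟨hu', hw'⟩ := h.eq_reverse hfg h' hu hw hw' (-T')
  refine (h.comp_add_const (T + T') (mapsTo_univ _ univ)).eq_of_eq hfg h (z₀ := -T') ?_ ?_ z
  · simp [hu', huT]
  · simp [hw', hwT, hwT']

lemma IsClampedOrbit.reaches_iff_of_isTurningTime (hF : IsRestoringForce F q m b)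
    (hG : ContinuousOn G (Ico q b)) (h : IsClampedOrbit F G q s u w) (hsb : s < b)
    (hT : IsTurningTime w T) (hqx : q < x) (hxs : x ≤ s) : Reaches F G q x ↔ x < u T := by
  refine ⟨fun hR => ?_, h.reaches_of_lt hT.time_pos hT.pos hqx hxs⟩
  obtain ⟨T', hT', rfl⟩ := (h.reaches_iff hF hG hxs hsb).1 hR
  have hT'T : T' < T := not_le.1 fun hle => (hT'.snd_pos T ⟨hT.time_pos, hle⟩).ne' hT.eq_zero
  exact h.strictMonoOn hT.pos ⟨hT'.time_pos.le, hT'T.le⟩ ⟨hT.time_pos.le, le_rfl⟩ hT'T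

lemma IsClampedOrbit.isTurningTime_of_reaches (hF : IsRestoringForce F q m b)
    (hG : ContinuousOn G (Ico q b)) (h : IsClampedOrbit F G q s u w) (hms : m ≤ s) (hsb : s < b)
    (hRm : Reaches F G q m) (hR : ¬Reaches F G q s) : ∃ T, IsTurningTime w T ∧ u T ≤ s := by
  refine (h.isTurningTime_or_isAsymptotic hF hG hms hsb hR).resolve_right fun hO => ?_
  obtain ⟨T, hT, huT⟩ := (h.reaches_iff hF hG hms hsb).1 hRm
  exact (hO.fst_lt T hT.time_pos).ne huT

theorem IsClampedOrbit.hasClosedOrbit (hF : IsRestoringForce F q m b)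
    (hG : ContinuousOn G (Ico q b)) (hqs : q < s) (hsb : s < b)
    (h : IsClampedOrbit F G q s u w) (h' : IsClampedOrbit F (-G) q s u' w')
    (hT : IsTurningTime w T) (hT' : IsTurningTime w' T') (huT : u T ≤ s) (heq : u T = u' T') :
    HasClosedOrbit F G q (Ico q b) := by
  have hreg := hF.lienardRegular_clampExt hG hqs.le hsb
  have hu0 := h.fst_zero.trans h'.fst_zero.symm
  have hper := h.sol.add_period hreg h'.sol hu0 h.snd_zero h'.snd_zero heq hT.eq_zero hT'.eq_zero
  have hmem : ∀ z, u z ∈ Icc q (u T) := fun z => by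
    obtain ⟨y, hy, hyz⟩ := Function.Periodic.exists_mem_Ico (fun z => (hper z).1)
      (add_pos hT.time_pos hT'.time_pos) z (-T')
    rw [hyz]
    rcases le_total 0 y with hy0 | hy0
    · exact h.mem_Icc hT.pos y ⟨hy0, by linarith [hy.2]⟩
    · rw [(h.sol.eq_reverse hreg h'.sol hu0 h.snd_zero h'.snd_zero y).1, heq]
      exact h'.mem_Icc hT'.pos (-y) ⟨by linarith, by linarith [hy.1]⟩
  have hqT : u 0 < u T := h.strictMonoOn hT.pos ⟨le_rfl, hT.time_pos.le⟩
    ⟨hT.time_pos.le, le_rfl⟩ hT.time_pos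
  have hclamp : ∀ H : ℝ → ℝ, ∀ z ∈ univ, clampExt H q s (u z) = H (u z) := fun H z _ =>
    clampExt_of_mem (Icc_subset_Icc_right huT (hmem z))
  exact ⟨u, w, h.sol.congr (hclamp F) (hclamp G),
    fun z => ⟨(hmem z).1, (hmem z).2.trans_lt (huT.trans_lt hsb)⟩, h.fst_zero, h.snd_zero,
    ⟨T + T', add_pos hT.time_pos hT'.time_pos, hper⟩, T, Or.inl hqT.ne'⟩

end ClosedOrbit

section Continuation

/-- Under the damping `G` the orbit from `(q, 0)` gets strictly further to the right of `m` than
under the damping `H`. -/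
def Outruns (F G H : ℝ → ℝ) (q m b : ℝ) : Prop :=
  ∃ s ∈ Ico m b, Reaches F G q s ∧ ¬Reaches F H q s

variable {F G H : ℝ → ℝ} {q m b : ℝ}

lemma Outruns.asymm (hF : IsRestoringForce F q m b) (h : Outruns F G H q m b) :
    ¬Outruns F H G q m b := by
  rintro ⟨t, ht, hHt, hGt⟩
  obtain ⟨s, hs, hGs, hHs⟩ := h
  rcases le_total s t with hst | hts
  · exact hHs (hHt.mono (hF.left_lt.trans_le hs.1) hst)
  · exact hGt (hGs.mono (hF.left_lt.trans_le ht.1) hts)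

lemma not_outruns_of_nonpos_of_nonneg (hF : IsRestoringForce F q m b)
    (hH : ContinuousOn H (Ico q b))
    (hG0 : ∀ x ∈ Ico q b, G x ≤ 0) (hH0 : ∀ x ∈ Ico q b, 0 ≤ H x) : ¬Outruns F G H q m b := by
  rintro ⟨s, ⟨hms, hsb⟩, hRG, hRH⟩
  have hqs : q < s := hF.left_lt.trans_le hms
  obtain ⟨u, w, h⟩ := hF.exists_isClampedOrbit hH hqs.le hsb
  have hRm := hF.reaches_center hH (hH0 m ⟨hF.left_lt.le, hF.lt_right⟩)
  obtain ⟨T, hT, huT⟩ := h.isTurningTime_of_reaches hF hH hms hsb hRm hRH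
  have hmT := h.lt_fst_of_isTurningTime hF hH hms hsb hT
  obtain ⟨u', w', T', h', huT'⟩ := hRG.mono (hF.left_lt.trans hmT) huT
  have hH' : ∀ z ∈ interior (Icc 0 T), 0 ≤ clampExt H q s (u z) := fun z _ =>
    hH0 _ (Icc_subset_Ico_right hsb (clamp_mem_Icc hqs.le _))
  have hEH := (h.sol.mono (subset_univ _)).monotoneOn_energy
    (hF.lienardRegular_clampExt hH hqs.le hsb).lipschitz.choose_spec.continuous (convex_Icc 0 T)
    hH' m (left_mem_Icc.2 hT.time_pos.le) (right_mem_Icc.2 hT.time_pos.le) hT.time_pos.le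
  have hEG := h'.neg_primitive_lt_of_nonpos hF (huT'.trans_le huT) hsb
    (left_mem_Icc.2 h'.time_pos.le) fun x hx => hG0 x
      ⟨h'.fst_zero ▸ hx.1, (hx.2.trans (huT'.trans_le huT)).trans_lt hsb⟩
  simp only [h.fst_zero, h.snd_zero, hT.eq_zero] at hEH
  rw [h'.fst_zero, h'.snd_zero, huT'] at hEG
  linarith

lemma Outruns.exists_forall_outruns (hF : IsRestoringForce F q m b)
    (hG : ContinuousOn G (Ico q b)) (hH : ContinuousOn H (Ico q b)) (h : Outruns F G H q m b) :
    ∃ s < b, ∃ ε > 0, ∀ G' H', ContinuousOn G' (Ico q b) → ContinuousOn H' (Ico q b) →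
      (∀ x ∈ Icc q s, |G' x - G x| ≤ ε) → (∀ x ∈ Icc q s, |H' x - H x| ≤ ε) →
        Outruns F G' H' q m b := by
  obtain ⟨s, ⟨hms, hsb⟩, hRG, hRH⟩ := h
  obtain ⟨s', ⟨hss', hs'b⟩, hRG'⟩ := hRG.exists_gt hF hG hsb
  have hms' := hms.trans hss'.le
  obtain ⟨σ, hσb, ε, hε, hreach⟩ := hRG'.exists_forall_reaches hF hG hms' hs'b
  obtain ⟨δ, hδ, hnot⟩ := exists_forall_not_reaches hF hH hms hss' hs'b hRH
  refine ⟨max σ s', max_lt hσb hs'b, min ε δ, lt_min hε hδ, fun G' H' hG' hH' hGG' hHH' =>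
    ⟨s', ⟨hms', hs'b⟩, hreach G' hG' fun x hx => ?_, hnot H' hH' fun x hx => ?_⟩⟩
  · exact (hGG' x ⟨hx.1, hx.2.trans (le_max_left _ _)⟩).trans (min_le_left _ _)
  · exact (hHH' x ⟨hx.1, hx.2.trans (le_max_right _ _)⟩).trans (min_le_right _ _)

theorem hasClosedOrbit_of_not_outruns (hF : IsRestoringForce F q m b)
    (hG : ContinuousOn G (Ico q b)) (hGn : ¬Outruns F G (-G) q m b)
    (hnG : ¬Outruns F (-G) G q m b)
    (hcov : ∃ s ∈ Ioo q b, ¬(Reaches F G q s ∧ Reaches F (-G) q s)) :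
    HasClosedOrbit F G q (Ico q b) := by
  have hiff : ∀ x ∈ Ico m b, Reaches F G q x ↔ Reaches F (-G) q x := fun x hx =>
    ⟨fun hR => not_not.1 fun hn => hGn ⟨x, hx, hR, hn⟩,
      fun hR => not_not.1 fun hn => hnG ⟨x, hx, hR, hn⟩⟩
  have hm : m ∈ Ico m b := ⟨le_rfl, hF.lt_right⟩
  have hRm : Reaches F G q m := by
    rcases le_total 0 (G m) with hGm | hGm
    · exact hF.reaches_center hG hGm
    · exact (hiff m hm).2 (hF.reaches_center hG.neg (neg_nonneg.2 hGm))
  have hRm' := (hiff m hm).1 hRm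
  obtain ⟨s, ⟨hqs, hsb⟩, hcov⟩ := hcov
  have hms : m ≤ s := not_lt.1 fun hsm => hcov ⟨hRm.mono hqs hsm.le, hRm'.mono hqs hsm.le⟩
  have hR : ¬Reaches F G q s := fun hR => hcov ⟨hR, (hiff s ⟨hms, hsb⟩).1 hR⟩
  have hR' : ¬Reaches F (-G) q s := fun hR' => hR ((hiff s ⟨hms, hsb⟩).2 hR')
  obtain ⟨u, w, h⟩ := hF.exists_isClampedOrbit hG hqs.le hsb
  obtain ⟨u', w', h'⟩ := hF.exists_isClampedOrbit hG.neg hqs.le hsb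
  obtain ⟨T, hT, huT⟩ := h.isTurningTime_of_reaches hF hG hms hsb hRm hR
  obtain ⟨T', hT', huT'⟩ := h'.isTurningTime_of_reaches hF hG.neg hms hsb hRm' hR'
  have hlt : ∀ x ∈ Ioc m s, x < u T ↔ x < u' T' := fun x hx => by
    have hqx := hF.left_lt.trans hx.1
    rw [← h.reaches_iff_of_isTurningTime hF hG hsb hT hqx hx.2,
      ← h'.reaches_iff_of_isTurningTime hF hG.neg hsb hT' hqx hx.2]
    exact hiff x ⟨hx.1.le, hx.2.trans_lt hsb⟩
  refine h.hasClosedOrbit hF hG hqs hsb h' hT hT' huT (le_antisymm ?_ ?_)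
  · have hmem := h'.lt_fst_of_isTurningTime hF hG.neg hms hsb hT'
    exact not_lt.1 fun hc => lt_irrefl _ ((hlt _ ⟨hmem, huT'⟩).1 hc)
  · have hmem := h.lt_fst_of_isTurningTime hF hG hms hsb hT
    exact not_lt.1 fun hc => lt_irrefl _ ((hlt _ ⟨hmem, huT⟩).2 hc)

lemma isOpen_setOf_outruns {ι : Type*} [TopologicalSpace ι] {Γ Δ : ι → ℝ → ℝ}
    (hF : IsRestoringForce F q m b) (hΓ : ∀ μ, ContinuousOn (Γ μ) (Ico q b))
    (hΔ : ∀ μ, ContinuousOn (Δ μ) (Ico q b))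
    (hΓc : ∀ μ, ∀ s < b, TendstoUniformlyOn Γ (Γ μ) (nhds μ) (Icc q s))
    (hΔc : ∀ μ, ∀ s < b, TendstoUniformlyOn Δ (Δ μ) (nhds μ) (Icc q s)) :
    IsOpen {μ | Outruns F (Γ μ) (Δ μ) q m b} := by
  refine isOpen_iff_mem_nhds.2 fun μ hμ => ?_
  obtain ⟨s, hsb, ε, hε, hout⟩ := Outruns.exists_forall_outruns hF (hΓ μ) (hΔ μ) hμ
  filter_upwards [Metric.tendstoUniformlyOn_iff.1 (hΓc μ s hsb) ε hε,
    Metric.tendstoUniformlyOn_iff.1 (hΔc μ s hsb) ε hε] with ν hΓν hΔν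
  refine hout _ _ (hΓ ν) (hΔ ν) (fun x hx => ?_) fun x hx => ?_
  · exact (abs_sub_comm _ _).trans_le (hΓν x hx).le
  · exact (abs_sub_comm _ _).trans_le (hΔν x hx).le

/-- The parameters for which `Γ μ` outruns `-Γ μ`, and those for which `-Γ μ` outruns `Γ μ`, form
disjoint nonempty open sets, which cannot cover the connected parameter space. -/
theorem exists_hasClosedOrbit {ι : Type*} [TopologicalSpace ι] [PreconnectedSpace ι]
    {Γ : ι → ℝ → ℝ} (hF : IsRestoringForce F q m b) (hΓ : ∀ μ, ContinuousOn (Γ μ) (Ico q b))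
    (hΓc : ∀ μ, ∀ s < b, TendstoUniformlyOn Γ (Γ μ) (nhds μ) (Icc q s))
    (hpos : ∃ μ, ∀ x ∈ Ico q b, 0 ≤ Γ μ x) (hneg : ∃ μ, ∀ x ∈ Ico q b, Γ μ x ≤ 0)
    (hcov : ∀ μ, ∃ s ∈ Ioo q b, ¬(Reaches F (Γ μ) q s ∧ Reaches F (-Γ μ) q s)) :
    ∃ μ, HasClosedOrbit F (Γ μ) q (Ico q b) := by
  by_contra! hno
  have hΓn : ∀ μ, ContinuousOn (-Γ μ) (Ico q b) := fun μ => (hΓ μ).neg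
  have hΓnc : ∀ μ, ∀ s < b, TendstoUniformlyOn (-Γ) (-Γ μ) (nhds μ) (Icc q s) :=
    fun μ s hs => (hΓc μ s hs).neg
  have hcover : ∀ μ, Outruns F (Γ μ) (-Γ μ) q m b ∨ Outruns F (-Γ μ) (Γ μ) q m b := fun μ => by
    by_contra! ⟨hGn, hnG⟩
    exact hno μ (hasClosedOrbit_of_not_outruns hF (hΓ μ) hGn hnG (hcov μ))
  obtain ⟨μ, hμ⟩ := hpos
  obtain ⟨ν, hν⟩ := hneg
  have hμ' := (hcover μ).resolve_right <| not_outruns_of_nonpos_of_nonneg hF (hΓ μ)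
    (fun x hx => neg_nonpos.2 (hμ x hx)) hμ
  have hν' := (hcover ν).resolve_left <| not_outruns_of_nonpos_of_nonneg hF (hΓn ν)
    hν fun x hx => neg_nonneg.2 (hν x hx)
  obtain ⟨μ₀, -, h₁, h₂⟩ := isPreconnected_univ _ _
    (isOpen_setOf_outruns hF hΓ hΓn hΓc hΓnc) (isOpen_setOf_outruns hF hΓn hΓ hΓnc hΓc)
    (fun μ _ => hcover μ) ⟨μ, mem_univ μ, hμ'⟩ ⟨ν, mem_univ ν, hν'⟩
  exact Outruns.asymm hF h₁ h₂

end Continuation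

section PhaseGraph

/-- A positive solution `v` on `I` of the phase-plane equation `dw/du = F(u)/w + G(u)`: its graph
consists of orbits of `u' = w`, `w' = F(u) + G(u) w` in the upper half plane. -/
def IsPhaseGraphOn (F G : ℝ → ℝ) (I : Set ℝ) (v : ℝ → ℝ) : Prop :=
  ∀ x ∈ I, 0 < v x ∧ HasDerivAt v (F x / v x + G x) x

/-- An increasing heteroclinic orbit from `a` to `b`. The condition `w → 0` at `-∞` is not part of
the definition. -/
structure IsConnection (F G : ℝ → ℝ) (a b : ℝ) (u w : ℝ → ℝ) : Prop where
  sol : IsLienardSolOn F G univ u w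
  tendsto_atBot : Tendsto u atBot (nhds a)
  tendsto_atTop : Tendsto u atTop (nhds b)
  tendsto_snd : Tendsto w atTop (nhds 0)
  snd_pos : ∀ z, 0 < w z

variable {F G H Θ θ u w v W : ℝ → ℝ} {q m a b c T : ℝ} {s I J : Set ℝ}

lemma IsPhaseGraphOn.mono (h : IsPhaseGraphOn F G I v) (hJ : J ⊆ I) : IsPhaseGraphOn F G J v :=
  fun x hx => h x (hJ hx)

lemma IsPhaseGraphOn.continuousOn (h : IsPhaseGraphOn F G I v) : ContinuousOn v I :=
  HasDerivAt.continuousOn fun x hx => (h x hx).2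

lemma IsLienardSolOn.exists_isPhaseGraphOn (h : IsLienardSolOn F G s u w) (hs : IsOpen s)
    (hsc : Convex ℝ s) (hw : ∀ z ∈ s, 0 < w z) :
    ∃ v, (∀ z ∈ s, v (u z) = w z) ∧ IsPhaseGraphOn F G (u '' s) v := by
  have hmono : StrictMonoOn u s := h.strictMonoOn hsc fun z hz => hw z (interior_subset hz)
  have hleft : ∀ z ∈ s, Function.invFunOn u s (u z) = z := hmono.injOn.leftInvOn_invFunOn
  have hv : ∀ z ∈ s, (w ∘ Function.invFunOn u s) (u z) = w z := fun z hz =>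
    congrArg w (hleft z hz)
  refine ⟨w ∘ Function.invFunOn u s, hv, ?_⟩
  rintro _ ⟨z, hz, rfl⟩
  rw [hv z hz]
  refine ⟨hw z hz, ?_⟩
  have hsnhds := hs.mem_nhds hz
  have hu : HasStrictDerivAt u (w z) z := hasStrictDerivAt_of_hasDerivAt_of_continuousAt
    (mem_of_superset hsnhds fun y hy => (h y hy).1) (h z hz).2.continuousAt
  have hinv : HasDerivAt (Function.invFunOn u s) (w z)⁻¹ (u z) :=
    (hu.to_local_left_inverse (hw z hz).ne' (mem_of_superset hsnhds hleft)).hasDerivAt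
  refine (HasDerivAt.comp (u z) (by rw [hleft z hz]; exact (h z hz).2) hinv).congr_deriv ?_
  have := (hw z hz).ne'
  field_simp

lemma IsAscent.exists_isPhaseGraphOn (h : IsAscent F G q u w T) :
    ∃ v, (∀ z ∈ Ioo 0 T, v (u z) = w z) ∧ IsPhaseGraphOn F G (Ioo q (u T)) v := by
  obtain ⟨v, hv, hgraph⟩ := (h.sol.mono Ioo_subset_Icc_self).exists_isPhaseGraphOn isOpen_Ioo
    (convex_Ioo 0 T) fun z hz => h.snd_pos z (Ioo_subset_Ioc_self hz)
  refine ⟨v, hv, hgraph.mono ?_⟩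
  simpa only [h.fst_zero] using intermediate_value_Ioo h.time_pos.le h.sol.continuousOn_fst

lemma IsAscent.tendsto_fst (h : IsAscent F G q u w T) :
    Tendsto u (nhdsWithin 0 (Ioi 0)) (nhdsWithin q (Ioi q)) := by
  have hu := (h.sol 0 (left_mem_Icc.2 h.time_pos.le)).1.continuousAt.tendsto
  rw [h.fst_zero] at hu
  exact tendsto_nhdsWithin_iff.2 ⟨hu.mono_left nhdsWithin_le_nhds,
    mem_of_superset (Ioc_mem_nhdsGT h.time_pos) fun z hz => (h.restrict hz).lt_fst⟩

lemma exists_isPhaseGraphOn_of_forall_reaches (hF : IsRestoringForce F q m b)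
    (hG : ContinuousOn G (Ico q b)) (hall : ∀ s ∈ Ioo q b, Reaches F G q s) :
    ∃ v, IsPhaseGraphOn F G (Ioo q b) v ∧
      ∀ d > 0, ∃ᶠ x in nhdsWithin q (Ioi q), v x < d := by
  have hval : ∀ x : ℝ, ∃ y, x ∈ Ioo q b → ∃ u w T, IsAscent F G q u w T ∧ u T = x ∧ w T = y :=
    fun x => by
      by_cases hx : x ∈ Ioo q b
      · obtain ⟨u, w, T, hT, huT⟩ := hall x hx
        exact ⟨w T, fun _ => ⟨u, w, T, hT, huT, rfl⟩⟩
      · exact ⟨0, fun h => absurd h hx⟩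
  choose v hv using hval
  have hasc : ∀ {u w T}, IsAscent F G q u w T → u T < b → v (u T) = w T := fun {u w T} h hb => by
    obtain ⟨u', w', T', h', hu', hw'⟩ := hv (u T) ⟨h.lt_fst, hb⟩
    exact hw'.symm.trans (h'.eq_of_fst_eq hF hG h hu' (hu'.trans_lt hb)).2
  refine ⟨v, fun x hx => ?_, fun d hd => ?_⟩
  · obtain ⟨y, hxy, hyb⟩ := exists_between hx.2
    obtain ⟨u, w, T, h, rfl⟩ := hall y ⟨hx.1.trans hxy, hyb⟩
    obtain ⟨v', hv', hgraph⟩ := h.exists_isPhaseGraphOn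
    have heq : ∀ x ∈ Ioo q (u T), v' x = v x := fun x hx => by
      rw [← h.fst_zero] at hx
      obtain ⟨z, hz, rfl⟩ := intermediate_value_Ioo h.time_pos.le h.sol.continuousOn_fst hx
      rw [hv' z hz, hasc (h.restrict (Ioo_subset_Ioc_self hz)) (hx.2.trans hyb)]
    obtain ⟨hpos, hder⟩ := hgraph x ⟨hx.1, hxy⟩
    rw [heq x ⟨hx.1, hxy⟩] at hpos hder
    exact ⟨hpos, hder.congr_of_eventuallyEq
      (mem_of_superset (Ioo_mem_nhds hx.1 hxy) fun x hx => (heq x hx).symm)⟩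
  · obtain ⟨s, hs⟩ := exists_between (hF.left_lt.trans hF.lt_right)
    obtain ⟨u, w, T, h, rfl⟩ := hall s hs
    have h0 : (0 : ℝ) ∈ Icc 0 T := left_mem_Icc.2 h.time_pos.le
    refine h.tendsto_fst.frequently (Eventually.frequently ?_)
    have hw : ∀ᶠ z in nhdsWithin 0 (Ioi 0), w z < d := ((h.sol 0 h0).2.continuousAt.eventually
      (gt_mem_nhds (h.snd_zero.trans_lt hd))).filter_mono nhdsWithin_le_nhds
    filter_upwards [Ioc_mem_nhdsGT h.time_pos, hw] with z hz hwz
    rwa [hasc (h.restrict hz) ((h.mem_Icc z (Ioc_subset_Icc_self hz)).2.trans_lt hs.2)]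

lemma IsConnection.exists_isPhaseGraphOn (h : IsConnection F G a b u w) :
    ∃ v, IsPhaseGraphOn F G (Ioo a b) v ∧ ∀ d > 0, ∃ᶠ x in nhdsWithin b (Iio b), v x < d := by
  obtain ⟨v, hv, hgraph⟩ :=
    h.sol.exists_isPhaseGraphOn isOpen_univ convex_univ fun z _ => h.snd_pos z
  refine ⟨v, hgraph.mono fun x hx => ?_, fun d hd => ?_⟩
  · obtain ⟨z₁, hz₁⟩ := (h.tendsto_atBot.eventually (gt_mem_nhds hx.1)).exists
    obtain ⟨z₂, hz₂⟩ := (h.tendsto_atTop.eventually (lt_mem_nhds hx.2)).exists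
    rw [image_univ]
    exact mem_range_of_exists_le_of_exists_ge (continuousOn_univ.1 h.sol.continuousOn_fst)
      ⟨z₁, hz₁.le⟩ ⟨z₂, hz₂.le⟩
  · have hmono : StrictMono u :=
      strictMonoOn_univ.1 (h.sol.strictMonoOn convex_univ fun z _ => h.snd_pos z)
    have hu : Tendsto u atTop (nhdsWithin b (Iio b)) :=
      tendsto_nhdsWithin_iff.2 ⟨h.tendsto_atTop, Eventually.of_forall fun z =>
        (hmono (lt_add_one z)).trans_le (hmono.monotone.ge_of_tendsto h.tendsto_atTop _)⟩
    refine hu.frequently (Eventually.frequently ?_)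
    filter_upwards [h.tendsto_snd.eventually (gt_mem_nhds hd)] with z hz
    rwa [hv z (mem_univ z)]

lemma IsRestoringForce.continuousOn (hF : IsRestoringForce F q m b) : ContinuousOn F (Ioo q b) :=
  fun x hx => by
    obtain ⟨s, hxs, hsb⟩ := exists_between hx.2
    obtain ⟨L, hL⟩ := hF.lipschitzOnWith s hsb
    exact (hL.continuousOn.continuousAt (Icc_mem_nhds hx.1 hxs)).continuousWithinAt

lemma IsPhaseGraphOn.hasDerivAt_sub_le (hv : IsPhaseGraphOn F G I v) (hW : IsPhaseGraphOn F H I W)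
    (hGH : ∀ x ∈ I, G x ≤ H x) {x : ℝ} (hx : x ∈ I) :
    F x / v x + G x - (F x / W x + H x) ≤ -F x / (v x * W x) * (v x - W x) := by
  have hvx := (hv x hx).1.ne'
  have hWx := (hW x hx).1.ne'
  have : F x / v x - F x / W x = -F x / (v x * W x) * (v x - W x) := by field_simp; ring
  linarith [hGH x hx]

/-- A phase graph issuing from `(q, 0)` cannot cross a positive barrier, and beyond `m` its
distance to the barrier increases; so the barrier cannot come down to zero at `b`. -/
lemma IsPhaseGraphOn.false_of_barrier (hF : IsRestoringForce F q m b)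
    (hv : IsPhaseGraphOn F G (Ioo q b) v) (hW : IsPhaseGraphOn F H (Ico q b) W)
    (hGH : ∀ x ∈ Ioo q b, G x ≤ H x) (hvq : ∀ d > 0, ∃ᶠ x in nhdsWithin q (Ioi q), v x < d)
    (hWb : ∀ d > 0, ∃ᶠ x in nhdsWithin b (Iio b), W x < d) : False := by
  have hW' := hW.mono Ioo_subset_Ico_self
  have hder : ∀ x ∈ Ioo q b, HasDerivAt (fun x => v x - W x)
      (F x / v x + G x - (F x / W x + H x)) x := fun x hx => (hv x hx).2.fun_sub (hW' x hx).2
  have hle := fun x hx => hv.hasDerivAt_sub_le hW' hGH (x := x) hx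
  have hbelow : ∀ x ∈ Ioo q b, v x - W x < 0 := fun x hx => by
    obtain ⟨hWq, hWq'⟩ := hW q ⟨le_rfl, hF.left_lt.trans hF.lt_right⟩
    have hnear : ∀ᶠ a in nhdsWithin q (Ioi q), W q / 2 < W a ∧ a ∈ Ioo q x :=
      ((hWq'.continuousAt.eventually (lt_mem_nhds (half_lt_self hWq))).filter_mono
        nhdsWithin_le_nhds).and (Ioo_mem_nhdsGT hx.1)
    obtain ⟨a, hva, hWa, ha⟩ := ((hvq _ (half_pos hWq)).and_eventually hnear).exists
    refine neg_of_hasDerivAt_le_mul (v := fun x => v x - W x) (convex_Ioo q b) isOpen_Ioo ?_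
      hder hle
      ⟨ha.1, ha.2.trans hx.2⟩ hx ha.2.le (by linarith)
    exact hF.continuousOn.neg.div (hv.continuousOn.mul hW'.continuousOn) fun x hx =>
      (mul_pos (hv x hx).1 (hW' x hx).1).ne'
  have hsub : Ioo m b ⊆ Ioo q b := Ioo_subset_Ioo_left hF.left_lt.le
  have hanti : AntitoneOn (fun x => v x - W x) (Ioo m b) := by
    refine antitoneOn_of_hasDerivAt_nonpos (convex_Ioo m b) (fun x hx => hder x (hsub hx))
      fun x hx => ?_
    rw [interior_Ioo] at hx
    refine (hle x (hsub hx)).trans (mul_nonpos_of_nonneg_of_nonpos ?_ (hbelow x (hsub hx)).le)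
    exact div_nonneg (neg_nonneg.2 (hF.neg x hx).le)
      (mul_pos (hv x (hsub hx)).1 (hW' x (hsub hx)).1).le
  obtain ⟨s, hs⟩ := exists_between hF.lt_right
  obtain ⟨x, hWx, hx⟩ := ((hWb (W s - v s) (by linarith [hbelow s (hsub hs)])).and_eventually
    (Ioo_mem_nhdsLT hs.2)).exists
  have hx' : x ∈ Ioo m b := ⟨hs.1.trans hx.1, hx.2⟩
  have hgap : v x - W x ≤ v s - W s := hanti hs hx' hx.1.le
  linarith [(hv x (hsub hx')).1]

lemma IsPhaseGraphOn.antitoneOn_sq_add (hv : IsPhaseGraphOn F G I v) (hI : Convex ℝ I)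
    (hΘ : ∀ x ∈ I, HasDerivAt Θ (θ x) x) (hF : ∀ x ∈ I, F x ≤ -θ x) (hG : ∀ x ∈ I, G x ≤ 0) :
    AntitoneOn (fun x => v x ^ 2 / 2 + Θ x) I := by
  refine antitoneOn_of_hasDerivAt_nonpos hI (v' := fun x => F x + G x * v x + θ x)
    (fun x hx => ?_) fun x hx => ?_
  · have hvx := (hv x hx).1.ne'
    refine (((hv x hx).2.fun_pow 2).div_const 2 |>.fun_add (hΘ x hx)).congr_deriv ?_
    field_simp
    ring
  · have hx' := interior_subset hx
    linarith [hF x hx', mul_nonpos_of_nonpos_of_nonneg (hG x hx') (hv x hx').1.le]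

lemma IsPhaseGraphOn.antitoneOn_add (hv : IsPhaseGraphOn F G I v) (hI : Convex ℝ I)
    (hΘ : ∀ x ∈ I, HasDerivAt Θ (θ x) x) (hF : ∀ x ∈ I, F x ≤ 0) (hG : ∀ x ∈ I, G x ≤ -θ x) :
    AntitoneOn (fun x => v x + Θ x) I := by
  refine antitoneOn_of_hasDerivAt_nonpos hI (fun x hx => (hv x hx).2.fun_add (hΘ x hx))
    fun x hx => ?_
  have hx' := interior_subset hx
  linarith [hG x hx', div_nonpos_of_nonpos_of_nonneg (hF x hx') (hv x hx').1.le]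

lemma not_antitoneOn_add_of_tendsto_atTop {P : ℝ → ℝ} (hcb : c < b)
    (hP : ∀ x ∈ Ioo c b, 0 ≤ P x) (hΘ : Tendsto Θ (nhdsWithin b (Iio b)) atTop) :
    ¬AntitoneOn (fun x => P x + Θ x) (Ioo c b) := fun hanti => by
  obtain ⟨s, hs⟩ := exists_between hcb
  obtain ⟨x, hlt, hx⟩ :=
    ((hΘ.eventually_gt_atTop (P s + Θ s)).and (Ioo_mem_nhdsLT hs.2)).exists
  have hx' : x ∈ Ioo c b := ⟨hs.1.trans hx.1, hx.2⟩
  have hle : P x + Θ x ≤ P s + Θ s := hanti hs hx' hx.1.le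
  linarith [hP x hx']

theorem exists_not_reaches_of_isConnection (hF : IsRestoringForce F q m b)
    (hG : ContinuousOn G (Ico q b)) (h : IsConnection F H a b u w) (haq : a < q)
    (hGH : ∀ x ∈ Ico q b, G x ≤ H x) : ∃ s ∈ Ioo q b, ¬Reaches F G q s := by
  by_contra! hall
  obtain ⟨v, hv, hvq⟩ := exists_isPhaseGraphOn_of_forall_reaches hF hG hall
  obtain ⟨W, hW, hWb⟩ := h.exists_isPhaseGraphOn
  exact hv.false_of_barrier hF (hW.mono (Ico_subset_Ioo_left haq))
    (fun x hx => hGH x (Ioo_subset_Ico_self hx)) hvq hWb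

theorem exists_not_reaches_of_le_neg (hF : IsRestoringForce F q m b)
    (hG : ContinuousOn G (Ico q b)) (hqc : q ≤ c) (hcb : c < b)
    (hΘ : ∀ x ∈ Ioo c b, HasDerivAt Θ (θ x) x) (hΘb : Tendsto Θ (nhdsWithin b (Iio b)) atTop)
    (hFθ : ∀ x ∈ Ioo c b, F x ≤ -θ x) (hG0 : ∀ x ∈ Ioo c b, G x ≤ 0) :
    ∃ s ∈ Ioo q b, ¬Reaches F G q s := by
  by_contra! hall
  obtain ⟨v, hv, -⟩ := exists_isPhaseGraphOn_of_forall_reaches hF hG hall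
  exact not_antitoneOn_add_of_tendsto_atTop hcb (fun x _ => by positivity) hΘb <|
    (hv.mono (Ioo_subset_Ioo_left hqc)).antitoneOn_sq_add (convex_Ioo c b) hΘ hFθ hG0

theorem exists_not_reaches_of_damping_le_neg (hF : IsRestoringForce F q m b)
    (hG : ContinuousOn G (Ico q b)) (hmc : m ≤ c) (hcb : c < b)
    (hΘ : ∀ x ∈ Ioo c b, HasDerivAt Θ (θ x) x) (hΘb : Tendsto Θ (nhdsWithin b (Iio b)) atTop)
    (hGθ : ∀ x ∈ Ioo c b, G x ≤ -θ x) : ∃ s ∈ Ioo q b, ¬Reaches F G q s := by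
  by_contra! hall
  obtain ⟨v, hv, -⟩ := exists_isPhaseGraphOn_of_forall_reaches hF hG hall
  have hv' := hv.mono (Ioo_subset_Ioo_left (hF.left_lt.le.trans hmc))
  exact not_antitoneOn_add_of_tendsto_atTop hcb (fun x hx => (hv' x hx).1.le) hΘb <|
    hv'.antitoneOn_add (convex_Ioo c b) hΘ
      (fun x hx => (hF.neg x (Ioo_subset_Ioo_left hmc hx)).le) hGθ

end PhaseGraph

section AffineDamping

/-- The damping coefficient `g(x) (e(x) + μ)`. For (TV), `g = g₂` and `e = f'`. -/
def affineDamping (g e : ℝ → ℝ) (μ x : ℝ) : ℝ := g x * (e x + μ)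

/-- Hypotheses on `g` and `e` under which `affineDamping g e μ` is continuous on `I`, increasing in
`μ`, and of constant sign on `I` for large `|μ|`. -/
structure IsDampingPair (g e : ℝ → ℝ) (I : Set ℝ) : Prop where
  continuousOn_fst : ContinuousOn g I
  continuousOn_snd : ContinuousOn e I
  pos : ∀ x ∈ I, 0 < g x
  bounded : ∃ M, ∀ x ∈ I, |e x| ≤ M

/-- A `C¹` force on `(a, b)` that drives every point towards the simple zero `m`. -/
structure IsRestoringOn (F : ℝ → ℝ) (a m b : ℝ) : Prop where
  contDiffOn : ContDiffOn ℝ 1 F (Ioo a b)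
  left_lt : a < m
  lt_right : m < b
  pos : ∀ x ∈ Ioo a m, 0 < F x
  zero : F m = 0
  neg : ∀ x ∈ Ioo m b, F x < 0
  hasDerivAt : ∃ d < 0, HasDerivAt F d m

variable {F G g e Θ u w u' w' : ℝ → ℝ} {a m b q l C μ ν μ₁ μ₂ : ℝ} {I J : Set ℝ}

lemma IsDampingPair.mono (h : IsDampingPair g e I) (hJ : J ⊆ I) : IsDampingPair g e J where
  continuousOn_fst := h.continuousOn_fst.mono hJ
  continuousOn_snd := h.continuousOn_snd.mono hJ
  pos x hx := h.pos x (hJ hx)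
  bounded := h.bounded.imp fun _ hM x hx => hM x (hJ hx)

lemma neg_mem_Ioo_neg {x : ℝ} (hx : x ∈ Ioo (-b) (-a)) : -x ∈ Ioo a b :=
  ⟨lt_neg_of_lt_neg hx.2, neg_lt_of_neg_lt hx.1⟩

lemma IsDampingPair.reflect (h : IsDampingPair g e (Ioo a b)) :
    IsDampingPair (fun x => g (-x)) (fun x => e (-x)) (Ioo (-b) (-a)) where
  continuousOn_fst := h.continuousOn_fst.comp continuousOn_neg fun _ => neg_mem_Ioo_neg
  continuousOn_snd := h.continuousOn_snd.comp continuousOn_neg fun _ => neg_mem_Ioo_neg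
  pos x hx := h.pos (-x) (neg_mem_Ioo_neg hx)
  bounded := h.bounded.imp fun _ hM x hx => hM (-x) (neg_mem_Ioo_neg hx)

lemma IsDampingPair.continuousOn (h : IsDampingPair g e I) (μ : ℝ) :
    ContinuousOn (affineDamping g e μ) I :=
  h.continuousOn_fst.mul (h.continuousOn_snd.add continuousOn_const)

lemma IsDampingPair.affineDamping_le (h : IsDampingPair g e I) (hμ : μ ≤ ν) :
    ∀ x ∈ I, affineDamping g e μ x ≤ affineDamping g e ν x := fun x hx =>
  mul_le_mul_of_nonneg_left (by gcongr) (h.pos x hx).le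

lemma IsDampingPair.tendstoUniformlyOn (h : IsDampingPair g e I) (hI : IsCompact I) (μ : ℝ) :
    TendstoUniformlyOn (affineDamping g e) (affineDamping g e μ) (nhds μ) I := by
  obtain ⟨B, hB⟩ := hI.exists_bound_of_continuousOn h.continuousOn_fst
  rw [Metric.tendstoUniformlyOn_iff]
  intro ε hε
  have hlim : Tendsto (fun ν => B * |μ - ν|) (nhds μ) (nhds 0) := by
    have : Continuous fun ν => B * |μ - ν| := by fun_prop
    simpa using this.tendsto μ
  filter_upwards [hlim.eventually_lt_const hε] with ν hν x hx
  calc dist (affineDamping g e μ x) (affineDamping g e ν x) = ‖g x‖ * |μ - ν| := by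
        rw [Real.dist_eq, ← Real.norm_eq_abs, ← Real.norm_eq_abs, ← norm_mul]
        congr 1
        simp only [affineDamping]
        ring
    _ ≤ B * |μ - ν| := by gcongr; exact hB x hx
    _ < ε := hν

lemma IsRestoringOn.isRestoringForce (hF : IsRestoringOn F a m b) (hq : q ∈ Ioo a m) :
    IsRestoringForce F q m b where
  left_lt := hq.2
  lt_right := hF.lt_right
  lipschitzOnWith s hs := (hF.contDiffOn.mono (Icc_subset_Ioo hq.1 hs)).exists_lipschitzOnWith
    one_ne_zero (convex_Icc q s) isCompact_Icc
  pos x hx := hF.pos x ⟨hq.1.trans_le hx.1, hx.2⟩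
  zero := hF.zero
  neg := hF.neg
  hasDerivAt := hF.hasDerivAt

lemma IsRestoringOn.reflect (hF : IsRestoringOn F a m b) :
    IsRestoringOn (fun x => -F (-x)) (-b) (-m) (-a) where
  contDiffOn := (hF.contDiffOn.comp contDiff_neg.contDiffOn fun _ => neg_mem_Ioo_neg).neg
  left_lt := neg_lt_neg hF.lt_right
  lt_right := neg_lt_neg hF.left_lt
  pos x hx := neg_pos.2 (hF.neg (-x) (neg_mem_Ioo_neg hx))
  zero := by rw [neg_neg, hF.zero, neg_zero]
  neg x hx := neg_neg_of_pos (hF.pos (-x) (neg_mem_Ioo_neg hx))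
  hasDerivAt := by
    obtain ⟨d, hd, hFd⟩ := hF.hasDerivAt
    rw [← neg_neg m] at hFd
    exact ⟨d, hd, (hFd.comp (-m) (hasDerivAt_neg (-m))).fun_neg.congr_deriv (by ring)⟩

lemma HasClosedOrbit.mono (h : HasClosedOrbit F G q I) (hJ : I ⊆ J) : HasClosedOrbit F G q J := by
  obtain ⟨u, w, hsol, hI, hrest⟩ := h
  exact ⟨u, w, hsol, fun z => hJ (hI z), hrest⟩

lemma HasClosedOrbit.of_reflect
    (h : HasClosedOrbit (fun x => -F (-x)) (fun x => G (-x)) (-q) (Ioo (-b) (-a))) :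
    HasClosedOrbit F G q (Ioo a b) := by
  obtain ⟨u, w, hsol, hI, hu, hw, ⟨Z, hZ, hper⟩, ⟨z, hz⟩⟩ := h
  have hrefl := hsol.reflect
  simp only [neg_neg] at hrefl
  refine ⟨-u, -w, hrefl, fun z => neg_mem_Ioo_neg (hI z), by simp [hu], by simp [hw],
    ⟨Z, hZ, fun z => by simp [hper z]⟩, ⟨z, by simpa [neg_inj] using hz⟩⟩

theorem exists_hasClosedOrbit_affineDamping (hF : IsRestoringForce F q m b)
    (hG : IsDampingPair g e (Ico q b))
    (hcov : ∀ μ, ∃ s ∈ Ioo q b,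
      ¬Reaches F (affineDamping g e μ) q s ∨ ¬Reaches F (-affineDamping g e μ) q s) :
    ∃ μ, HasClosedOrbit F (affineDamping g e μ) q (Ico q b) := by
  obtain ⟨M, hM⟩ := hG.bounded
  refine exists_hasClosedOrbit hF hG.continuousOn (fun μ s hs =>
    (hG.mono (Icc_subset_Ico_right hs)).tendstoUniformlyOn isCompact_Icc μ)
    ⟨M, fun x hx => ?_⟩ ⟨-M, fun x hx => ?_⟩ fun μ => ?_
  · exact mul_nonneg (hG.pos x hx).le (by linarith [neg_le_of_abs_le (hM x hx)])
  · exact mul_nonpos_of_nonneg_of_nonpos (hG.pos x hx).le (by linarith [le_of_abs_le (hM x hx)])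
  · obtain ⟨s, hs, hs'⟩ := hcov μ
    exact ⟨s, hs, not_and_or.2 hs'⟩

-- For every `μ`, one of the two heteroclinic orbits is a barrier that keeps the forward orbit or
-- the backward orbit of `(q, 0)` away from `b`.
theorem exists_hasClosedOrbit_of_isConnection (hF : IsRestoringOn F a m b) (hq : q ∈ Ioo a m)
    (hG : IsDampingPair g e (Ioo a b)) (h₁ : IsConnection F (affineDamping g e μ₁) a b u w)
    (h₂ : IsConnection F (-affineDamping g e μ₂) a b u' w') (hμ : μ₂ ≤ μ₁) :
    ∃ μ, HasClosedOrbit F (affineDamping g e μ) q (Ioo a b) := by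
  have hsub : Ico q b ⊆ Ioo a b := Ico_subset_Ioo_left hq.1
  have hFq := hF.isRestoringForce hq
  have hGq := hG.mono hsub
  refine (exists_hasClosedOrbit_affineDamping hFq hGq fun μ => ?_).imp fun μ h => h.mono hsub
  rcases le_total μ μ₁ with hle | hle
  · obtain ⟨s, hs, hR⟩ := exists_not_reaches_of_isConnection hFq (hGq.continuousOn μ) h₁ hq.1
      (hGq.affineDamping_le hle)
    exact ⟨s, hs, Or.inl hR⟩
  · obtain ⟨s, hs, hR⟩ := exists_not_reaches_of_isConnection hFq (hGq.continuousOn μ).neg h₂ hq.1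
      fun x hx => neg_le_neg (hGq.affineDamping_le (hμ.trans hle) x hx)
    exact ⟨s, hs, Or.inr hR⟩

-- If `μ ≤ -l`, the damping is nonpositive near `b` and the force, whose primitive diverges, turns
-- the forward orbit back. If `-l < μ`, the primitive of the damping itself diverges, which turns
-- the backward orbit back.
theorem exists_hasClosedOrbit_of_tendsto_atTop (hF : IsRestoringOn F a m b) (hq : q ∈ Ioo a m)
    (hG : IsDampingPair g e (Ioo a b)) (hΘ : ∀ x ∈ Ioo a b, HasDerivAt Θ (g x) x)
    (hΘb : Tendsto Θ (nhdsWithin b (Iio b)) atTop) (hC : 0 < C)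
    (hFC : ∀ᶠ x in nhdsWithin b (Iio b), F x ≤ -(C * g x))
    (hel : ∀ᶠ x in nhdsWithin b (Iio b), e x ≤ l)
    (he : Tendsto e (nhdsWithin b (Iio b)) (nhds l)) :
    ∃ μ, HasClosedOrbit F (affineDamping g e μ) q (Ioo a b) := by
  have hsub : Ico q b ⊆ Ioo a b := Ico_subset_Ioo_left hq.1
  have hFq := hF.isRestoringForce hq
  have hGq := hG.mono hsub
  have hsubm : ∀ {c}, m ≤ c → Ioo c b ⊆ Ioo a b := fun hmc =>
    Ioo_subset_Ioo_left (hF.left_lt.le.trans hmc)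
  have hΘC : ∀ C, ∀ x ∈ Ioo a b, HasDerivAt (fun x => C * Θ x) (C * g x) x := fun C x hx =>
    (hΘ x hx).const_mul C
  refine (exists_hasClosedOrbit_affineDamping hFq hGq fun μ => ?_).imp fun μ h => h.mono hsub
  rcases le_or_gt μ (-l) with hμ | hμ
  · obtain ⟨c, hc, hcb⟩ := (mem_nhdsLT_iff_exists_mem_Ico_Ioo_subset hF.lt_right).1 (hFC.and hel)
    obtain ⟨s, hs, hR⟩ := exists_not_reaches_of_le_neg hFq (hGq.continuousOn μ)
      (hq.2.le.trans hc.1) hc.2 (fun x hx => hΘC C x (hsubm hc.1 hx)) (hΘb.const_mul_atTop hC)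
      (fun x hx => (hcb hx).1) fun x hx => mul_nonpos_of_nonneg_of_nonpos
        (hG.pos x (hsubm hc.1 hx)).le (by linarith [(hcb hx).2])
    exact ⟨s, hs, Or.inl hR⟩
  · have hδ : 0 < (l + μ) / 2 := by linarith
    have heδ : ∀ᶠ x in nhdsWithin b (Iio b), (l + μ) / 2 - μ < e x :=
      he.eventually_const_lt (by linarith)
    obtain ⟨c, hc, hcb⟩ := (mem_nhdsLT_iff_exists_mem_Ico_Ioo_subset hF.lt_right).1 heδ
    obtain ⟨s, hs, hR⟩ := exists_not_reaches_of_damping_le_neg hFq (hGq.continuousOn μ).neg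
      hc.1 hc.2 (fun x hx => hΘC _ x (hsubm hc.1 hx)) (hΘb.const_mul_atTop hδ) fun x hx => by
        have hex : (l + μ) / 2 - μ < e x := hcb hx
        rw [Pi.neg_apply, neg_le_neg_iff, affineDamping, mul_comm]
        exact mul_le_mul_of_nonneg_left (by linarith) (hG.pos x (hsubm hc.1 hx)).le
    exact ⟨s, hs, Or.inr hR⟩

theorem exists_hasClosedOrbit_of_tendsto_atBot (hF : IsRestoringOn F a m b) (hq : q ∈ Ioo m b)
    (hG : IsDampingPair g e (Ioo a b)) (hΘ : ∀ x ∈ Ioo a b, HasDerivAt Θ (g x) x)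
    (hΘa : Tendsto Θ (nhdsWithin a (Ioi a)) atBot) (hC : 0 < C)
    (hFC : ∀ᶠ x in nhdsWithin a (Ioi a), C * g x ≤ F x)
    (hel : ∀ᶠ x in nhdsWithin a (Ioi a), e x ≤ l)
    (he : Tendsto e (nhdsWithin a (Ioi a)) (nhds l)) :
    ∃ μ, HasClosedOrbit F (affineDamping g e μ) q (Ioo a b) := by
  have hneg : Tendsto Neg.neg (nhdsWithin (-a) (Iio (-a))) (nhdsWithin a (Ioi a)) :=
    tendsto_neg_nhdsLT_neg
  refine (exists_hasClosedOrbit_of_tendsto_atTop (q := -q) (Θ := fun x => -Θ (-x)) hF.reflect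
    ⟨neg_lt_neg hq.2, neg_lt_neg hq.1⟩ hG.reflect (fun x hx => ?_)
    (tendsto_neg_atBot_atTop.comp (hΘa.comp hneg)) hC
    ((hneg.eventually hFC).mono fun x hx => neg_le_neg hx) (hneg.eventually hel)
    (he.comp hneg)).imp fun μ h => h.of_reflect
  exact ((hΘ (-x) (neg_mem_Ioo_neg hx)).comp x (hasDerivAt_neg x)).fun_neg.congr_deriv (by ring)

end AffineDamping

section Heteroclinic

variable {F G g e u w u' w' : ℝ → ℝ} {a m b q μ₁ μ₂ : ℝ}

lemma HE1.reflect (h : HE1 a b u w) : HE2 (-b) (-a) (-u) (-w) := by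
  obtain ⟨hbot, htop, hbot', htop', hw⟩ := h
  exact ⟨hbot.neg, htop.neg, neg_zero (G := ℝ) ▸ hbot'.neg, neg_zero (G := ℝ) ▸ htop'.neg,
    fun z => neg_neg_of_pos (hw z)⟩

lemma HE2.reflect (h : HE2 a b u w) : HE1 (-b) (-a) (-u) (-w) := by
  obtain ⟨hbot, htop, hbot', htop', hw⟩ := h
  exact ⟨hbot.neg, htop.neg, neg_zero (G := ℝ) ▸ hbot'.neg, neg_zero (G := ℝ) ▸ htop'.neg,
    fun z => neg_pos.2 (hw z)⟩

lemma HE1.isConnection (h : HE1 a b u w) (hsol : IsLienardSolOn F G univ u w) :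
    IsConnection F G a b u w where
  sol := hsol
  tendsto_atBot := h.1
  tendsto_atTop := h.2.1
  tendsto_snd := h.2.2.2.1
  snd_pos := h.2.2.2.2

lemma HE2.isConnection (h : HE2 a b u w) (hsol : IsLienardSolOn F G univ u w) :
    IsConnection F (-G) a b (fun z => u (-z)) fun z => -w (-z) where
  sol := hsol.reverse (mapsTo_univ _ univ)
  tendsto_atBot := h.2.1.comp tendsto_neg_atBot_atTop
  tendsto_atTop := h.1.comp tendsto_neg_atTop_atBot
  tendsto_snd := by simpa using (h.2.2.1.comp tendsto_neg_atTop_atBot).neg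
  snd_pos z := neg_pos.2 (h.2.2.2.2 (-z))

theorem exists_hasClosedOrbit_left_of_HE1_of_HE2 (hF : IsRestoringOn F a m b) (hq : q ∈ Ioo a m)
    (hG : IsDampingPair g e (Ioo a b)) (h₁ : HE1 a b u w)
    (hsol₁ : IsLienardSolOn F (affineDamping g e μ₁) univ u w) (h₂ : HE2 a b u' w')
    (hsol₂ : IsLienardSolOn F (affineDamping g e μ₂) univ u' w') (hμ : μ₂ ≤ μ₁) :
    ∃ μ, HasClosedOrbit F (affineDamping g e μ) q (Ioo a b) :=
  exists_hasClosedOrbit_of_isConnection hF hq hG (h₁.isConnection hsol₁) (h₂.isConnection hsol₂) hμ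

theorem exists_hasClosedOrbit_right_of_HE1_of_HE2 (hF : IsRestoringOn F a m b) (hq : q ∈ Ioo m b)
    (hG : IsDampingPair g e (Ioo a b)) (h₁ : HE1 a b u w)
    (hsol₁ : IsLienardSolOn F (affineDamping g e μ₁) univ u w) (h₂ : HE2 a b u' w')
    (hsol₂ : IsLienardSolOn F (affineDamping g e μ₂) univ u' w') (hμ : μ₁ ≤ μ₂) :
    ∃ μ, HasClosedOrbit F (affineDamping g e μ) q (Ioo a b) :=
  (exists_hasClosedOrbit_left_of_HE1_of_HE2 hF.reflect ⟨neg_lt_neg hq.2, neg_lt_neg hq.1⟩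
    hG.reflect h₂.reflect hsol₂.reflect h₁.reflect hsol₁.reflect hμ).imp fun _ h => h.of_reflect

end Heteroclinic

section CubicShape

/-- `f` is increasing on `[0, a]`, decreasing on `[a, m]` and increasing on `[m, ∞)`; this is the
shape of the function `f` in (TV) for `K₀ < K < K_M`. -/
structure IsCubicShaped (f f' : ℝ → ℝ) (a m : ℝ) : Prop where
  continuousOn : ContinuousOn f (Ici 0)
  hasDerivAt : ∀ x ∈ Ioi 0, HasDerivAt f (f' x) x
  left_pos : 0 < a
  left_lt_right : a < m
  deriv_pos_left : ∀ x ∈ Ioo 0 a, 0 < f' x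
  deriv_neg : ∀ x ∈ Ioo a m, f' x < 0
  deriv_pos_right : ∀ x ∈ Ioi m, 0 < f' x

variable {f f' g : ℝ → ℝ} {a m x y z t : ℝ}

lemma IsCubicShaped.strictMonoOn_left (h : IsCubicShaped f f' a m) : StrictMonoOn f (Icc 0 a) := by
  refine strictMonoOn_of_deriv_pos (convex_Icc 0 a) (h.continuousOn.mono Icc_subset_Ici_self) ?_
  rw [interior_Icc]
  exact fun x hx => (h.hasDerivAt x hx.1).deriv ▸ h.deriv_pos_left x hx

lemma IsCubicShaped.strictAntiOn (h : IsCubicShaped f f' a m) : StrictAntiOn f (Icc a m) := by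
  refine strictAntiOn_of_deriv_neg (convex_Icc a m)
    (h.continuousOn.mono fun x hx => h.left_pos.le.trans hx.1) ?_
  rw [interior_Icc]
  exact fun x hx => (h.hasDerivAt x (h.left_pos.trans hx.1)).deriv ▸ h.deriv_neg x hx

lemma IsCubicShaped.strictMonoOn_right (h : IsCubicShaped f f' a m) : StrictMonoOn f (Ici m) := by
  have hm : 0 < m := h.left_pos.trans h.left_lt_right
  refine strictMonoOn_of_deriv_pos (convex_Ici m) (h.continuousOn.mono (Ici_subset_Ici.2 hm.le)) ?_
  rw [interior_Ici]
  exact fun x hx => (h.hasDerivAt x (hm.trans hx)).deriv ▸ h.deriv_pos_right x hx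

lemma IsCubicShaped.mem_Ioo (h : IsCubicShaped f f' a m) (hx : 0 ≤ x) (hxy : x < y) (hyz : y < z)
    (hyx : f y ≤ f x) (hzy : f z ≤ f y) : y ∈ Ioo a m := by
  constructor <;> by_contra! hy
  · exact (h.strictMonoOn_left ⟨hx, hxy.le.trans hy⟩ ⟨hx.trans hxy.le, hy⟩ hxy).not_ge hyx
  · exact (h.strictMonoOn_right hy (hy.trans hyz.le) hyz).not_ge hzy

lemma IsCubicShaped.pos (h : IsCubicShaped f f' a m) (hx : 0 ≤ x) (hfx : 0 ≤ f x)
    (hy : y ∈ Ioo a m) (hfy : f y = 0) (ht : t ∈ Ioo x y) : 0 < f t := by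
  rcases le_total t a with hta | hat
  · exact hfx.trans_lt (h.strictMonoOn_left ⟨hx, ht.1.le.trans hta⟩ ⟨hx.trans ht.1.le, hta⟩ ht.1)
  · exact hfy ▸ h.strictAntiOn ⟨hat, ht.2.le.trans hy.2.le⟩ ⟨hy.1.le, hy.2.le⟩ ht.2

lemma IsCubicShaped.neg (h : IsCubicShaped f f' a m) (hy : y ∈ Ioo a m) (hfy : f y = 0)
    (hfz : f z = 0) (ht : t ∈ Ioo y z) : f t < 0 := by
  rcases le_total t m with htm | hmt
  · exact hfy ▸ h.strictAntiOn ⟨hy.1.le, hy.2.le⟩ ⟨hy.1.le.trans ht.1.le, htm⟩ ht.1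
  · exact hfz ▸ h.strictMonoOn_right hmt (mem_Ici.2 (hmt.trans ht.2.le)) ht.2

theorem IsCubicShaped.isRestoringOn_mul (h : IsCubicShaped f f' a m)
    (hf : ContDiffOn ℝ 1 f (Ioi 0)) (hg : ContDiffOn ℝ 1 g (Ioi 0)) (hg0 : ∀ x ∈ Ioi 0, 0 < g x)
    (hx : 0 ≤ x) (hxy : x < y) (hyz : y < z) (hfx : 0 ≤ f x) (hfy : f y = 0) (hfz : f z = 0) :
    IsRestoringOn (fun u => g u * f u) x y z := by
  have hy : y ∈ Ioo a m := h.mem_Ioo hx hxy hyz (by rwa [hfy]) (by rw [hfy, hfz])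
  have hy0 : 0 < y := hx.trans_lt hxy
  have hderiv := ((hg.differentiableOn one_ne_zero).differentiableAt
    (Ioi_mem_nhds hy0)).hasDerivAt.fun_mul (h.hasDerivAt y hy0)
  rw [hfy, mul_zero, zero_add] at hderiv
  exact
    { contDiffOn := (hg.mul hf).mono fun t ht => hx.trans_lt ht.1
      left_lt := hxy
      lt_right := hyz
      pos := fun t ht => mul_pos (hg0 t (hx.trans_lt ht.1)) (h.pos hx hfx hy hfy ht)
      zero := by rw [hfy, mul_zero]
      neg := fun t ht => mul_neg_of_pos_of_neg (hg0 t (hy0.trans ht.1)) (h.neg hy hfy hfz ht)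
      hasDerivAt := ⟨_, mul_neg_of_pos_of_neg (hg0 y hy0) (h.deriv_neg y hy), hderiv⟩ }

end CubicShape

section TravelingWave

/-- The force `g₁ f` of (TV). -/
def forceTV (V κ : ℝ → ℝ) (τ K c u : ℝ) : ℝ := g1TV κ τ u * fTV V K c u

variable {V V' V'' κ u w : ℝ → ℝ} {τ UM K c μ a b q x : ℝ}

lemma isTVSol_iff : IsTVSol V V' κ τ K c μ u w ↔
    IsLienardSolOn (forceTV V κ τ K c) (affineDamping (g2TV κ τ) (fdTV V' K) μ) univ u w :=
  ⟨fun h z _ => ⟨h.1 z, h.2 z⟩, fun h => ⟨fun z => (h z trivial).1, fun z => (h z trivial).2⟩⟩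

lemma HasClosedOrbit.exists_isTVSol (h : HasClosedOrbit (forceTV V κ τ K c)
    (affineDamping (g2TV κ τ) (fdTV V' K) μ) q (Ioo a b)) (ha : 0 ≤ a) :
    ∃ u w, IsTVSol V V' κ τ K c μ u w ∧ (∀ z, 0 < u z) ∧
      u 0 = q ∧ w 0 = 0 ∧ IsPeriodicSol u w ∧ Nonconst u w := by
  obtain ⟨u, w, hsol, hI, hrest⟩ := h
  exact ⟨u, w, isTVSol_iff.2 hsol, fun z => ha.trans_lt (hI z).1, hrest⟩

lemma A1.hasDerivWithinAt (hA1 : A1 V V' V'' UM) :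
    ∀ u ∈ Ici 0, HasDerivWithinAt V (V' u) (Ici 0) u := hA1.1

lemma A1.continuousOn_deriv (hA1 : A1 V V' V'' UM) : ContinuousOn V' (Ici 0) := hA1.2.1

lemma A1.deriv_pos (hA1 : A1 V V' V'' UM) : ∀ u, 0 < u → 0 < V' u := hA1.2.2.2.2.1

lemma A1.deriv_le (hA1 : A1 V V' V'' UM) : ∀ u, 0 < u → V' u ≤ V' UM := hA1.2.2.2.2.2.2.2.2.1

lemma A1.inflection_pos (hA1 : A1 V V' V'' UM) : 0 < UM := hA1.2.2.2.2.2.2.2.1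

lemma A1.hasDerivAt (hA1 : A1 V V' V'' UM) (hx : 0 < x) : HasDerivAt V (V' x) x :=
  (hA1.hasDerivWithinAt x hx.le).hasDerivAt (Ici_mem_nhds hx)

lemma A1.contDiffOn (hA1 : A1 V V' V'' UM) : ContDiffOn ℝ 1 V (Ioi 0) := by
  rw [contDiffOn_one_iff_derivWithin isOpen_Ioi.uniqueDiffOn]
  refine ⟨fun u hu => (hA1.hasDerivAt hu).differentiableAt.differentiableWithinAt,
    (hA1.continuousOn_deriv.mono Ioi_subset_Ici_self).congr fun u hu => ?_⟩
  rw [derivWithin_of_isOpen isOpen_Ioi hu, (hA1.hasDerivAt hu).deriv]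

lemma A1.deriv_nonneg_zero (hA1 : A1 V V' V'' UM) : 0 ≤ V' 0 := by
  have hlim : Tendsto V' (nhdsWithin 0 (Ioi 0)) (nhds (V' 0)) :=
    (hA1.continuousOn_deriv 0 self_mem_Ici).mono_left (nhdsWithin_mono _ Ioi_subset_Ici_self)
  exact ge_of_tendsto hlim (eventually_mem_nhdsWithin.mono fun x hx => (hA1.deriv_pos x hx).le)

lemma A1.strictMonoOn_deriv (hA1 : A1 V V' V'' UM) : StrictMonoOn V' (Icc 0 UM) := by
  have hcont : ContinuousOn V' (Icc 0 UM) := hA1.continuousOn_deriv.mono Icc_subset_Ici_self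
  have hUM := hA1.inflection_pos
  obtain ⟨-, -, hd, -, -, -, -, -, hmax, hz⟩ := hA1
  rcases hasDerivWithinAt_forall_lt_or_forall_gt_of_forall_ne (convex_Ioo 0 UM)
    (fun x hx => (hd x hx.1).hasDerivWithinAt)
    (fun x hx h0 => hx.2.ne ((hz x hx.1).1 h0)) with hneg | hpos
  · have hanti : StrictAntiOn V' (Icc 0 UM) := strictAntiOn_of_deriv_neg (convex_Icc 0 UM) hcont
      (by rw [interior_Icc]; exact fun x hx => (hd x hx.1).deriv ▸ hneg x hx)
    have hlt := hanti ⟨(half_pos hUM).le, (half_lt_self hUM).le⟩ ⟨hUM.le, le_rfl⟩ (half_lt_self hUM)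
    exact absurd (hmax _ (half_pos hUM)) hlt.not_ge
  · exact strictMonoOn_of_deriv_pos (convex_Icc 0 UM) hcont
      (by rw [interior_Icc]; exact fun x hx => (hd x hx.1).deriv ▸ hpos x hx)

lemma A1.strictAntiOn_deriv (hA1 : A1 V V' V'' UM) : StrictAntiOn V' (Ici UM) := by
  have hUM := hA1.inflection_pos
  have hcont : ContinuousOn V' (Ici UM) := hA1.continuousOn_deriv.mono (Ici_subset_Ici.2 hUM.le)
  obtain ⟨-, -, hd, -, -, -, -, -, hmax, hz⟩ := hA1
  rcases hasDerivWithinAt_forall_lt_or_forall_gt_of_forall_ne (convex_Ioi UM)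
    (fun x hx => (hd x (hUM.trans hx)).hasDerivWithinAt)
    (fun x hx h0 => (ne_of_gt hx) ((hz x (hUM.trans hx)).1 h0)) with hneg | hpos
  · exact strictAntiOn_of_deriv_neg (convex_Ici UM) hcont
      (by rw [interior_Ici]; exact fun x hx => (hd x (hUM.trans hx)).deriv ▸ hneg x hx)
  · have hmono : StrictMonoOn V' (Ici UM) := strictMonoOn_of_deriv_pos (convex_Ici UM) hcont
      (by rw [interior_Ici]; exact fun x hx => (hd x (hUM.trans hx)).deriv ▸ hpos x hx)
    have hlt := hmono self_mem_Ici (mem_Ici.2 (le_add_of_nonneg_right one_pos.le)) (lt_add_one UM)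
    exact absurd (hmax _ (hUM.trans (lt_add_one UM))) hlt.not_ge

lemma A1.exists_superlevel_eq_Ioo (hA1 : A1 V V' V'' UM) (hK : K ∈ Ioo (V' 0) (V' UM)) :
    ∃ a m, 0 < a ∧ a < m ∧ (∀ x ∈ Ioo 0 a, V' x < K) ∧ (∀ x ∈ Ioo a m, K < V' x) ∧
      ∀ x ∈ Ioi m, V' x < K := by
  have hmono := hA1.strictMonoOn_deriv
  have hanti := hA1.strictAntiOn_deriv
  have hUM := hA1.inflection_pos
  have hcont := hA1.continuousOn_deriv
  have hlim : Tendsto V' atTop (nhds 0) := hA1.2.2.2.2.2.2.1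
  obtain ⟨a, ha, rfl⟩ := intermediate_value_Ioo hUM.le (hcont.mono Icc_subset_Ici_self) hK
  obtain ⟨y, hyK, hy⟩ := ((hlim.eventually_lt_const (hA1.deriv_nonneg_zero.trans_lt hK.1)).and
    (eventually_gt_atTop UM)).exists
  obtain ⟨m, hm, hmK⟩ := intermediate_value_Ioo' hy.le
    (hcont.mono (Icc_subset_Ici_self.trans (Ici_subset_Ici.2 hUM.le))) ⟨hyK, hK.2⟩
  have ha' : a ∈ Icc 0 UM := Ioo_subset_Icc_self ha
  refine ⟨a, m, ha.1, ha.2.trans hm.1,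
    fun x hx => hmono ⟨hx.1.le, hx.2.le.trans ha.2.le⟩ ha' hx.2, fun x hx => ?_,
    fun x hx => hmK ▸ hanti (mem_Ici.2 hm.1.le) (mem_Ici.2 (hm.1.trans hx).le) hx⟩
  rcases le_total x UM with hxU | hUx
  · exact hmono ha' ⟨ha.1.le.trans hx.1.le, hxU⟩ hx.1
  · exact hmK ▸ hanti (mem_Ici.2 hUx) (mem_Ici.2 hm.1.le) hx.2

lemma A1.hasDerivWithinAt_fTV (hA1 : A1 V V' V'' UM) (K c : ℝ) :
    ∀ x ∈ Ici 0, HasDerivWithinAt (fTV V K c) (fdTV V' K x) (Ici 0) x := fun x hx =>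
  (((((hasDerivAt_id x).const_mul K).hasDerivWithinAt.fun_sub
    (hA1.hasDerivWithinAt x hx)).sub_const c).div_const K).congr_deriv (by simp [fdTV])

lemma A1.contDiffOn_fTV (hA1 : A1 V V' V'' UM) (K c : ℝ) : ContDiffOn ℝ 1 (fTV V K c) (Ioi 0) := by
  have := hA1.contDiffOn
  unfold fTV
  fun_prop

lemma A1.continuousOn_fdTV (hA1 : A1 V V' V'' UM) (K : ℝ) : ContinuousOn (fdTV V' K) (Ici 0) :=
  (continuousOn_const.sub hA1.continuousOn_deriv).div_const K

lemma A1.exists_isCubicShaped (hA1 : A1 V V' V'' UM) (hK : K ∈ Ioo (V' 0) (V' UM)) (c : ℝ) :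
    ∃ a m, IsCubicShaped (fTV V K c) (fdTV V' K) a m := by
  have hK0 : 0 < K := hA1.deriv_nonneg_zero.trans_lt hK.1
  have hf := hA1.hasDerivWithinAt_fTV K c
  obtain ⟨a, m, ha, ham, hleft, hmid, hright⟩ := hA1.exists_superlevel_eq_Ioo hK
  exact ⟨a, m,
    { continuousOn := fun x hx => (hf x hx).continuousWithinAt
      hasDerivAt := fun x hx => (hf x (Ioi_subset_Ici_self hx)).hasDerivAt (Ici_mem_nhds hx)
      left_pos := ha
      left_lt_right := ham
      deriv_pos_left := fun x hx => div_pos (sub_pos.2 (hleft x hx)) hK0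
      deriv_neg := fun x hx => div_neg_of_neg_of_pos (sub_neg.2 (hmid x hx)) hK0
      deriv_pos_right := fun x hx => div_pos (sub_pos.2 (hright x hx)) hK0 }⟩

lemma A2.g1TV_pos (hA2 : A2 κ) (hτ : 0 < τ) : ∀ x ∈ Ioi 0, 0 < g1TV κ τ x := fun _ hx =>
  one_div_pos.2 (mul_pos hτ (hA2.2 _ (one_div_pos.2 hx)))

lemma A2.contDiffOn_g1TV (hA2 : A2 κ) (hτ : 0 < τ) : ContDiffOn ℝ 1 (g1TV κ τ) (Ioi 0) := by
  have hinv : ContDiffOn ℝ 1 (fun x : ℝ => 1 / x) (Ioi 0) :=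
    contDiffOn_const.div contDiffOn_id fun x hx => ne_of_gt hx
  have hmaps : MapsTo (fun x : ℝ => 1 / x) (Ioi 0) (Ioi 0) := fun x hx =>
    mem_Ioi.2 (one_div_pos.2 hx)
  exact contDiffOn_const.div (contDiffOn_const.mul (hA2.1.comp hinv hmaps)) fun x hx =>
    (mul_pos hτ (hA2.2 _ (hmaps hx))).ne'

lemma g2TV_eq_half_mul_g1TV (κ : ℝ → ℝ) (τ x : ℝ) : g2TV κ τ x = x / 2 * g1TV κ τ x := by
  unfold g2TV g1TV
  ring

lemma isDampingPair_g2TV_fdTV (hA1 : A1 V V' V'' UM) (hA2 : A2 κ) (hτ : 0 < τ) (hK : 0 < K) :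
    IsDampingPair (g2TV κ τ) (fdTV V' K) (Ioi 0) where
  continuousOn_fst := ((continuous_id.div_const 2).continuousOn.mul
    (hA2.contDiffOn_g1TV hτ).continuousOn).congr fun x _ => g2TV_eq_half_mul_g1TV κ τ x
  continuousOn_snd := (hA1.continuousOn_fdTV K).mono Ioi_subset_Ici_self
  pos x hx := by
    rw [g2TV_eq_half_mul_g1TV]
    exact mul_pos (half_pos hx) (hA2.g1TV_pos hτ x hx)
  bounded := by
    refine ⟨(K + V' UM) / K, fun x hx => ?_⟩
    have hpos := hA1.deriv_pos x hx
    have hle := hA1.deriv_le x hx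
    rw [fdTV, abs_div, abs_of_pos hK]
    gcongr
    exact abs_le.2 ⟨by linarith, by linarith⟩

theorem isRestoringOn_forceTV {u1 u0 u2 : ℝ} (hA1 : A1 V V' V'' UM) (hA2 : A2 κ) (hτ : 0 < τ)
    (hK : K ∈ Ioo (V' 0) (V' UM)) (hu1 : 0 ≤ u1) (h10 : u1 < u0) (h02 : u0 < u2)
    (hf1 : 0 ≤ fTV V K c u1) (hf0 : fTV V K c u0 = 0) (hf2 : fTV V K c u2 = 0) :
    IsRestoringOn (forceTV V κ τ K c) u1 u0 u2 := by
  obtain ⟨a, m, hshape⟩ := hA1.exists_isCubicShaped hK c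
  exact hshape.isRestoringOn_mul (hA1.contDiffOn_fTV K c) (hA2.contDiffOn_g1TV hτ)
    (hA2.g1TV_pos hτ) hu1 h10 h02 hf1 hf0 hf2

end TravelingWave

section VanishingHeadway

variable {V V' V'' κ φ : ℝ → ℝ} {τ UM K c a : ℝ}

lemma tendsto_intervalIntegral_atTop_of_not_integrableOn (hφ : ContinuousOn φ (Ici a))
    (hφ0 : ∀ x ∈ Ici a, 0 ≤ φ x) (hint : ¬IntegrableOn φ (Ioi a)) :
    Tendsto (fun x => ∫ t in a..x, φ t) atTop atTop := by
  have hii : ∀ x ∈ Ici a, ∀ y ∈ Ici a, IntervalIntegrable φ volume x y := fun x hx y hy =>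
    (hφ.mono fun _ ht => (le_min hx hy).trans ht.1).intervalIntegrable
  have hmono : MonotoneOn (fun x => ∫ t in a..x, φ t) (Ici a) := fun x hx y hy hxy => by
    rw [← sub_nonneg, intervalIntegral.integral_interval_sub_left (hii a self_mem_Ici y hy)
      (hii a self_mem_Ici x hx)]
    exact intervalIntegral.integral_nonneg hxy fun t ht => hφ0 t (le_trans hx ht.1)
  refine (tendsto_atTop_of_monotoneOn_Ici hmono).resolve_right fun ⟨l, hl⟩ => hint ?_
  refine integrableOn_Ioi_of_intervalIntegral_norm_tendsto l a (fun x => ?_) tendsto_id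
    (hl.congr' ?_)
  · rcases le_total a x with hax | hxa
    · exact (hii a self_mem_Ici x hax).1
    · rw [id, Ioc_eq_empty hxa.not_gt]
      exact integrableOn_empty
  · filter_upwards [eventually_ge_atTop a] with x hx
    refine intervalIntegral.integral_congr fun t ht => ?_
    rw [uIcc_of_le hx] at ht
    exact (Real.norm_of_nonneg (hφ0 t ht.1)).symm

-- The substitution `ρ = 1/x` turns `dρ / (ρ³ κ(ρ))` into `-2 τ g₂(x) dx`.
lemma CondH.exists_hasDerivAt_g2TV (hH : CondH κ) (hA2 : A2 κ) (hτ : 0 < τ) :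
    ∃ Θ : ℝ → ℝ, (∀ x ∈ Ioi 0, HasDerivAt Θ (g2TV κ τ x) x) ∧
      Tendsto Θ (nhdsWithin 0 (Ioi 0)) atBot := by
  have hpos : ∀ ρ ∈ Ioi (0 : ℝ), 0 < ρ ^ 3 * κ ρ := fun ρ hρ => mul_pos (pow_pos hρ 3) (hA2.2 ρ hρ)
  have hcont : ContinuousOn (fun ρ => 1 / (ρ ^ 3 * κ ρ)) (Ioi 0) :=
    continuousOn_const.div ((continuous_pow 3).continuousOn.mul hA2.1.continuousOn)
      fun ρ hρ => (hpos ρ hρ).ne'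
  have hsub : Ici (1 : ℝ) ⊆ Ioi 0 := Ici_subset_Ioi.2 one_pos
  have hΦ : ∀ ρ ∈ Ioi (0 : ℝ), HasDerivAt (fun ρ => ∫ t in (1 : ℝ)..ρ, 1 / (t ^ 3 * κ t))
      (1 / (ρ ^ 3 * κ ρ)) ρ := fun ρ hρ =>
    intervalIntegral.integral_hasDerivAt_right
      (hcont.mono fun t ht => (lt_min one_pos hρ).trans_le ht.1).intervalIntegrable
      (hcont.stronglyMeasurableAtFilter isOpen_Ioi ρ hρ) (hcont.continuousAt (Ioi_mem_nhds hρ))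
  have hΦtop := tendsto_intervalIntegral_atTop_of_not_integrableOn (hcont.mono hsub)
    (fun ρ hρ => (one_div_pos.2 (hpos ρ (hsub hρ))).le) hH
  refine ⟨fun x => -(2 * τ)⁻¹ * ∫ t in (1 : ℝ)..x⁻¹, 1 / (t ^ 3 * κ t), fun x hx => ?_,
    (hΦtop.comp tendsto_inv_nhdsGT_zero).const_mul_atTop_of_neg (by simpa using hτ)⟩
  have hx0 : x ≠ 0 := ne_of_gt hx
  have hderiv :=
    ((hΦ x⁻¹ (mem_Ioi.2 (inv_pos.2 hx))).comp x (hasDerivAt_inv hx0)).const_mul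
      (-(2 * τ)⁻¹)
  refine hderiv.congr_deriv ?_
  rw [g2TV, one_div x]
  field_simp

lemma fTV_zero_nonneg (hK : 0 < K) (hc : c ≤ c0v V) : 0 ≤ fTV V K c 0 :=
  div_nonneg (by rw [c0v] at hc; linarith) hK.le

lemma A1.eventually_mul_le_fTV (hA1 : A1 V V' V'' UM) (hK : V' 0 < K) (hc : c ≤ c0v V) :
    ∀ᶠ x in nhdsWithin 0 (Ioi 0), fdTV V' K 0 / 2 * x ≤ fTV V K c x := by
  have hK0 : 0 < K := hA1.deriv_nonneg_zero.trans_lt hK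
  have hd : 0 < fdTV V' K 0 := div_pos (sub_pos.2 hK) hK0
  have hf0 := fTV_zero_nonneg hK0 hc
  have hslope := hasDerivWithinAt_iff_tendsto_slope.1 (hA1.hasDerivWithinAt_fTV K c 0 self_mem_Ici)
  rw [Ici_sdiff_left] at hslope
  filter_upwards [hslope.eventually_const_lt (half_lt_self hd), self_mem_nhdsWithin] with x hx hx0
  rw [slope_def_field, sub_zero, lt_div_iff₀ hx0] at hx
  linarith

theorem exists_hasClosedOrbit_of_condH {u0 u2 q : ℝ} (hA1 : A1 V V' V'' UM) (hA2 : A2 κ)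
    (hτ : 0 < τ) (hK : K ∈ Ioo (V' 0) (V' UM)) (hH : CondH κ) (hc : c ≤ c0v V)
    (hF : IsRestoringOn (forceTV V κ τ K c) 0 u0 u2) (hq : q ∈ Ioo u0 u2) :
    ∃ μ, HasClosedOrbit (forceTV V κ τ K c) (affineDamping (g2TV κ τ) (fdTV V' K) μ) q
      (Ioo 0 u2) := by
  have hK0 : 0 < K := hA1.deriv_nonneg_zero.trans_lt hK.1
  have hUM := hA1.inflection_pos
  obtain ⟨Θ, hΘ, hΘ0⟩ := hH.exists_hasDerivAt_g2TV hA2 hτ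
  refine exists_hasClosedOrbit_of_tendsto_atBot (C := fdTV V' K 0) (l := fdTV V' K 0) hF hq
    ((isDampingPair_g2TV_fdTV hA1 hA2 hτ hK0).mono Ioo_subset_Ioi_self) (fun x hx => hΘ x hx.1) hΘ0
    (div_pos (sub_pos.2 hK.1) hK0) ?_ ?_
    ((hA1.continuousOn_fdTV K 0 self_mem_Ici).mono_left (nhdsWithin_mono 0 Ioi_subset_Ici_self))
  · filter_upwards [hA1.eventually_mul_le_fTV hK.1 hc, self_mem_nhdsWithin] with x hx hx0
    calc fdTV V' K 0 * g2TV κ τ x = g1TV κ τ x * (fdTV V' K 0 / 2 * x) := by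
          rw [g2TV_eq_half_mul_g1TV]
          ring
      _ ≤ forceTV V κ τ K c x := mul_le_mul_of_nonneg_left hx (hA2.g1TV_pos hτ x hx0).le
  · filter_upwards [Ioo_mem_nhdsGT hUM] with x hx
    have hlt := hA1.strictMonoOn_deriv ⟨le_rfl, hUM.le⟩ ⟨hx.1.le, hx.2.le⟩ hx.1
    exact div_le_div_of_nonneg_right (by linarith) hK0.le

end VanishingHeadway

lemma CondC.mem_Ioo {V V' κ umx : ℝ → ℝ} {UM K K₁ : ℝ} (hC : CondC V' κ UM K₁ K)
    (hK1 : K1Hyp V V' UM umx K₁) : K ∈ Ioo (V' 0) (V' UM) :=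
  hC.elim (fun h => ⟨hK1.1.trans h.1, h.2⟩) fun h => ⟨h.2.1, h.2.2.trans_lt hK1.2.1⟩

lemma CondC.condH_of_le {V' κ : ℝ → ℝ} {UM K K₁ : ℝ} (hC : CondC V' κ UM K₁ K) (hK : K ≤ K₁) :
    CondH κ :=
  hC.elim (fun h => absurd hK h.1.not_ge) And.left

lemma le_of_mem_D2 {V V' umx : ℝ → ℝ} {K c K₁ : ℝ} (h : (K, c) ∈ D2 V V' umx K₁) :
    K ≤ K₁ ∧ c ≤ c0v V :=
  h.elim (fun h => ⟨h.2.1.le, h.2.2.le⟩) fun h => ⟨h.2.1.le, h.2.2.2.le⟩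

theorem stmt6_general
    (V V' V'' κ : ℝ → ℝ) (τ UM K c : ℝ) (hA1 : A1 V V' V'' UM) (hA2 : A2 κ) (hτ : 0 < τ)
    (hK : K ∈ Ioo (V' 0) (V' UM)) (u0 u2 q : ℝ)
    (hq :
      (∃ u1 μb μf, ZerosD1 V K c u1 u0 u2 ∧
        HasHE1 V V' κ τ K c μb u1 u2 ∧ HasHE2 V V' κ τ K c μf u1 u2 ∧
        ((μf ≤ μb ∧ q ∈ Ioo u1 u0) ∨ (μb ≤ μf ∧ q ∈ Ioo u0 u2))) ∨
      (CondH κ ∧ c ≤ c0v V ∧ ZerosD2 V K c u0 u2 ∧ q ∈ Ioo u0 u2)) :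
    ∃ (μper : ℝ) (u w : ℝ → ℝ),
      IsTVSol V V' κ τ K c μper u w ∧ (∀ z, 0 < u z) ∧
      u 0 = q ∧ w 0 = 0 ∧ IsPeriodicSol u w ∧ Nonconst u w := by
  have hK0 : 0 < K := hA1.deriv_nonneg_zero.trans_lt hK.1
  suffices horbit : ∃ a, 0 ≤ a ∧ ∃ μ, HasClosedOrbit (forceTV V κ τ K c)
      (affineDamping (g2TV κ τ) (fdTV V' K) μ) q (Ioo a u2) by
    obtain ⟨a, ha, μ, h⟩ := horbit
    exact ⟨μ, h.exists_isTVSol ha⟩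
  rcases hq with ⟨u1, μb, μf, ⟨hu1, h10, h02, hf1, hf0, hf2, -⟩, ⟨_, _, hb, -, hHE1⟩,
    ⟨_, _, hf, -, hHE2⟩, hq⟩ | ⟨hH, hc, ⟨hu0, h02, hf0, hf2, -⟩, hq⟩
  · have hF := isRestoringOn_forceTV hA1 hA2 hτ hK hu1.le h10 h02 hf1.ge hf0 hf2
    have hsub : Ioo u1 u2 ⊆ Ioi 0 := fun x hx => hu1.trans hx.1
    have hG := (isDampingPair_g2TV_fdTV hA1 hA2 hτ hK0).mono hsub
    rw [isTVSol_iff] at hb hf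
    exact ⟨u1, hu1.le, hq.elim
      (fun hq => exists_hasClosedOrbit_left_of_HE1_of_HE2 hF hq.2 hG hHE1 hb hHE2 hf hq.1)
      fun hq => exists_hasClosedOrbit_right_of_HE1_of_HE2 hF hq.2 hG hHE1 hb hHE2 hf hq.1⟩
  · have hF := isRestoringOn_forceTV hA1 hA2 hτ hK le_rfl hu0 h02 (fTV_zero_nonneg hK0 hc) hf0 hf2
    exact ⟨0, le_rfl, exists_hasClosedOrbit_of_condH hA1 hA2 hτ hK hH hc hF hq⟩

theorem stmt6
    (V V' V'' κ : ℝ → ℝ) (τ UM K c K₁ : ℝ) (uMx umx : ℝ → ℝ)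
    (hA1 : A1 V V' V'' UM) (hA2 : A2 κ) (hτ : 0 < τ) (hK : K ≠ 0)
    (huMx : UMaxHyp V' UM uMx) (humx : UMinHyp V' UM umx)
    (hK1 : K1Hyp V V' UM umx K₁)
    (hC : CondC V' κ UM K₁ K) (u0 u2 q : ℝ) (Adm : Set ℝ)
    (hAdm :
      ((K, c) ∈ D1 V V' UM uMx umx ∧
        ∃ u1 μb μf, ZerosD1 V K c u1 u0 u2 ∧
          (∀ μ, HasHE1 V V' κ τ K c μ u1 u2 ↔ μ = μb) ∧
          (∀ μ, HasHE2 V V' κ τ K c μ u1 u2 ↔ μ = μf) ∧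
          ((μf ≤ μb ∧ Adm = Ioo u1 u0) ∨ (μb < μf ∧ Adm = Ioo u0 u2))) ∨
      ((K, c) ∈ D2 V V' umx K₁ ∧ ZerosD2 V K c u0 u2 ∧ Adm = Ioo u0 u2))
    (hq : q ∈ Adm) :
    ∃ (μper : ℝ) (u w : ℝ → ℝ),
      IsTVSol V V' κ τ K c μper u w ∧ (∀ z, 0 < u z) ∧
      u 0 = q ∧ w 0 = 0 ∧ IsPeriodicSol u w ∧ Nonconst u w := by
  have hK' := hC.mem_Ioo hK1
  refine stmt6_general V V' V'' κ τ UM K c hA1 hA2 hτ hK' u0 u2 q (hAdm.imp ?_ ?_)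
  · rintro ⟨-, u1, μb, μf, hz, hb, hf, ⟨hμ, rfl⟩ | ⟨hμ, rfl⟩⟩
    exacts [⟨u1, μb, μf, hz, (hb μb).2 rfl, (hf μf).2 rfl, Or.inl ⟨hμ, hq⟩⟩,
      ⟨u1, μb, μf, hz, (hb μb).2 rfl, (hf μf).2 rfl, Or.inr ⟨hμ.le, hq⟩⟩]
  · rintro ⟨hD, hz, rfl⟩
    obtain ⟨hKK₁, hc⟩ := le_of_mem_D2 hD
    exact ⟨hC.condH_of_le hKK₁, hc, hz, hq⟩

end TrafficTW
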